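/- Higher-order Euler–Lagrange equation on time scales. Suppose y* ∈ C^r_rd(𝕋;ℝⁿ) is a weak local minimizer of 𝓛 with all boundary data fixed: there is δ > 0 such that 𝓛[y*] ≤ 𝓛[y] for every y ∈ C^r_rd(𝕋;ℝⁿ) with y^{Δ^i}(a) = y*^{Δ^i}(a) and y^{Δ^i}(ρ^{r−1}(b)) = y*^{Δ^i}(ρ^{r−1}(b)) for i = 0,…,r−1, and ‖y − y*‖_{r,∞} < δ. Write X*(t) = (y*(t), y*^Δ(t), …, y*^{Δ^r}(t)). Then there exist functions p^0, …, p^{r−1} : 𝕋' → ℝⁿ, each delta differentiable at every t ∈ 𝕋^{k^r}, such that for all t ∈ 𝕋^{k^r}: (p^0)^Δ(t) = −L_{u_0}(t, X*(t)); (p^i)^Δ(t) = −L_{u_i}(t, X*(t)) − p^{i−1}(σ(t)) for i = 1, …, r−1; and p^{r−1}(σ(t)) = −L_{u_r}(t, X*(t)). (Equivalently, in delta-integral form: ψ^{r−1}(σ(t)) = −L_{u_r}(t,X*(t)) where ψ^0(σ(t)) = −∫_a^{σ(t)} L_{u_0}(ξ,X*(ξ)) Δξ + c_0 and ψ^i(σ(t))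 = −∫_a^{σ(t)} [L_{u_i}(ξ,X*(ξ)) + ψ^{i−1}(σ(ξ))] Δξ + c_i for constants c_0,…,c_{r−1} ∈ ℝⁿ.) -/

import Mathlib

open Set Filter

noncomputable section

-- Forward jump operator of the set `S`.
open Classical in
def tsSigma (S : Set ℝ) (t : ℝ) : ℝ :=
  if ({s | s ∈ S ∧ t < s}).Nonempty then sInf {s | s ∈ S ∧ t < s} else t

-- Backward jump operator of the set `S`.
open Classical in
def tsRho (S : Set ℝ) (t : ℝ) : ℝ :=
  if ({s | s ∈ S ∧ s < t}).Nonempty then sSup {s | s ∈ S ∧ s < t} else t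

/-- Graininess function. -/
def tsMu (S : Set ℝ) (t : ℝ) : ℝ := tsSigma S t - t

/-- `S^k = S \ (ρ(max S), max S]`. -/
def tsTk (S : Set ℝ) : Set ℝ := S \ Set.Ioc (tsRho S (sSup S)) (sSup S)

/-- Delta differentiability at `t` of `f` regarded as a function on the time scale `S`,
with delta derivative `d`. -/
def deltaDiffAt {E : Type*} [NormedAddCommGroup E] [NormedSpace ℝ E]
    (S : Set ℝ) (f : ℝ → E) (t : ℝ) (d : E) : Prop :=
  ∀ ε > 0, ∃ δ > 0, ∀ s ∈ S ∩ Set.Ioo (t - δ) (t + δ),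
    ‖f (tsSigma S t) - f s - (tsSigma S t - s) • d‖ ≤ ε * |tsSigma S t - s|

/-- rd-continuity of `f` on its domain `S`: continuity (within `S`) at right-dense points and
existence of a finite left-sided limit along `S` at left-dense points. -/
def RdContinuousOn {E : Type*} [NormedAddCommGroup E]
    (S : Set ℝ) (f : ℝ → E) : Prop :=
  ∀ t ∈ S, (tsSigma S t = t → ContinuousWithinAt f S t) ∧
    (tsRho S t = t → ∃ l : E, Filter.Tendsto f (nhdsWithin t (S ∩ Set.Iio t)) (nhds l))

/-- `y ∈ C¹_rd(T)`, with delta derivative `yd`. -/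
def C1rd {E : Type*} [NormedAddCommGroup E] [NormedSpace ℝ E]
    (T : Set ℝ) (y yd : ℝ → E) : Prop :=
  (∀ t ∈ tsTk T, deltaDiffAt T y t (yd t)) ∧ RdContinuousOn (tsTk T) yd

/-- `F` is a delta antiderivative of `f` on the time scale `S`; the delta integral
`∫_c^d f Δt` is `F d - F c` for any such `F`. -/
def IsDeltaAntideriv {E : Type*} [NormedAddCommGroup E] [NormedSpace ℝ E]
    (S : Set ℝ) (f F : ℝ → E) : Prop :=
  ∀ t ∈ tsTk S, deltaDiffAt S F t (f t)

/-- Sup norm of `f` over the set `S`. -/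
def tsSupNorm {E : Type*} [NormedAddCommGroup E] (S : Set ℝ) (f : ℝ → E) : ℝ :=
  sSup ((fun t => ‖f t‖) '' S)

abbrev En (n : ℕ) : Type := EuclideanSpace ℝ (Fin n)

/-!
Along a variation `N` with zero boundary data the first variation
`∫ ∑ i ≤ r, ⟪L_{u_i}, N^{Δ^i}⟫ Δt` vanishes. The boundary data at the right end are finitely many
linear functionals of `N`, and a linear functional vanishing on their common kernel is a linear
combination of them; so, for variations with zero data at `a` only, the first variation is
`∑ i < r, ⟪c i, N^{Δ^i}(ρ^{r-1}(b))⟫` for some multipliers `c i`. Solving the adjoint system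
`(p^i)^Δ = -L_{u_i} - p^{i-1} ∘ σ` with terminal values `-c i` and integrating by parts turns this
into `∫ ⟪L_{u_r} + p^{r-1} ∘ σ, N^{Δ^r}⟫ Δt = 0`, where `N^{Δ^r}` is an arbitrary rd-continuous
function, whence `p^{r-1} ∘ σ = -L_{u_r}`.
-/

open MeasureTheory Topology

/-- `A` is a bounded time scale with minimum `a` and maximum `b`. -/
structure IsTimeScale (A : Set ℝ) (a b : ℝ) : Prop where
  isClosed : IsClosed A
  isLeast : IsLeast A a
  isGreatest : IsGreatest A b

section Jump

variable {A : Set ℝ} {s t u x β : ℝ}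

theorem le_tsSigma (A : Set ℝ) (t : ℝ) : t ≤ tsSigma A t := by
  unfold tsSigma
  split_ifs with hne
  exacts [le_csInf hne fun s hs => hs.2.le, le_rfl]

theorem tsSigma_le (hu : u ∈ A) (htu : t < u) : tsSigma A t ≤ u := by
  rw [tsSigma, if_pos ⟨u, hu, htu⟩]
  exact csInf_le ⟨t, fun s hs => hs.2.le⟩ ⟨hu, htu⟩

theorem exists_mem_Ioo_of_tsSigma_lt (hu : u ∈ A) (htu : t < u) (hx : tsSigma A t < x) :
    ∃ s ∈ A, s ∈ Ioo t x := by
  have hne : {s | s ∈ A ∧ t < s}.Nonempty := ⟨u, hu, htu⟩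
  rw [tsSigma, if_pos hne] at hx
  obtain ⟨s, hs, hsx⟩ := exists_lt_of_csInf_lt hne hx
  exact ⟨s, hs.1, hs.2, hsx⟩

theorem tsSigma_mem (hA : IsClosed A) (ht : t ∈ A) : tsSigma A t ∈ A := by
  unfold tsSigma
  split_ifs with hne
  · have hbdd : BddBelow {s | s ∈ A ∧ t < s} := ⟨t, fun s hs => hs.2.le⟩
    exact hA.closure_subset_iff.2 (fun s hs => hs.1) (csInf_mem_closure hne hbdd)
  · exact ht

theorem tsRho_le (A : Set ℝ) (t : ℝ) : tsRho A t ≤ t := by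
  unfold tsRho
  split_ifs with hne
  exacts [csSup_le hne fun s hs => hs.2.le, le_rfl]

theorem le_tsRho (hu : u ∈ A) (hut : u < t) : u ≤ tsRho A t := by
  rw [tsRho, if_pos ⟨u, hu, hut⟩]
  exact le_csSup ⟨t, fun s hs => hs.2.le⟩ ⟨hu, hut⟩

theorem exists_mem_Ioo_of_lt_tsRho (hu : u ∈ A) (hut : u < t) (hx : x < tsRho A t) :
    ∃ s ∈ A, s ∈ Ioo x t := by
  have hne : {s | s ∈ A ∧ s < t}.Nonempty := ⟨u, hu, hut⟩
  rw [tsRho, if_pos hne] at hx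
  obtain ⟨s, hs, hxs⟩ := exists_lt_of_lt_csSup hne hx
  exact ⟨s, hs.1, hxs, hs.2⟩

theorem tsRho_mem (hA : IsClosed A) (ht : t ∈ A) : tsRho A t ∈ A := by
  unfold tsRho
  split_ifs with hne
  · have hbdd : BddAbove {s | s ∈ A ∧ s < t} := ⟨t, fun s hs => hs.2.le⟩
    exact hA.closure_subset_iff.2 (fun s hs => hs.1) (csSup_mem_closure hne hbdd)
  · exact ht

theorem mem_closure_inter_Iio (hs : s ∈ A) (hst : s < t) (hρ : tsRho A t = t) :
    t ∈ closure (A ∩ Iio t) := by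
  refine mem_closure_iff_nhds.2 fun U hU => ?_
  obtain ⟨x, hxt, hxU⟩ := exists_Ioc_subset_of_mem_nhds hU ⟨s, hst⟩
  obtain ⟨u, hu, hxu, hut⟩ := exists_mem_Ioo_of_lt_tsRho hs hst (hxt.trans_eq hρ.symm)
  exact ⟨u, hxU ⟨hxu, hut.le⟩, hu, hut⟩

theorem mem_closure_inter_Ioi (hs : s ∈ A) (hts : t < s) (hσ : tsSigma A t = t) :
    t ∈ closure (A ∩ Ioi t) := by
  refine mem_closure_iff_nhds.2 fun U hU => ?_
  obtain ⟨x, htx, hxU⟩ := exists_Ico_subset_of_mem_nhds hU ⟨s, hts⟩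
  obtain ⟨u, hu, htu, hux⟩ := exists_mem_Ioo_of_tsSigma_lt hs hts (hσ.trans_lt htx)
  exact ⟨u, hxU ⟨htu.le, hux⟩, hu, htu⟩

theorem tsRho_eq_of_mem_closure (ht : t ∈ closure (A ∩ Iio t)) : tsRho A t = t :=
  (tsRho_le A t).antisymm (closure_minimal (t := Iic (tsRho A t))
    (fun _ hs => le_tsRho hs.1 hs.2) isClosed_Iic ht)

theorem tsSigma_eq_of_mem_closure (ht : t ∈ closure (A ∩ Ioi t)) : tsSigma A t = t :=
  (closure_minimal (t := Ici (tsSigma A t))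
    (fun _ hs => tsSigma_le hs.1 hs.2) isClosed_Ici ht).antisymm (le_tsSigma A t)

theorem tsRho_inter_Iic (htβ : t ≤ β) : tsRho (A ∩ Iic β) t = tsRho A t := by
  have hset : {s | s ∈ A ∩ Iic β ∧ s < t} = {s | s ∈ A ∧ s < t} := by
    ext s
    exact ⟨fun hs => ⟨hs.1.1, hs.2⟩, fun hs => ⟨⟨hs.1, hs.2.le.trans htβ⟩, hs.2⟩⟩
  unfold tsRho
  rw [hset]

theorem tsSigma_inter_Iic (hβ : β ∈ A) (ht : t ≤ β) :
    tsSigma (A ∩ Iic β) t = min (tsSigma A t) β := by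
  rcases ht.eq_or_lt with rfl | ht
  · rw [min_eq_right (le_tsSigma A t), tsSigma, if_neg]
    rintro ⟨s, hs, hts⟩
    exact hs.2.not_gt hts
  have hle : tsSigma (A ∩ Iic β) t ≤ β := tsSigma_le ⟨hβ, self_mem_Iic⟩ ht
  refine le_antisymm (le_min (le_of_not_gt fun hlt => ?_) hle) (le_of_not_gt fun hlt => ?_)
  · obtain ⟨s, hs, hts, hsσ⟩ := exists_mem_Ioo_of_tsSigma_lt hβ ht hlt
    exact hsσ.not_ge (tsSigma_le ⟨hs, hsσ.le.trans hle⟩ hts)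
  · obtain ⟨s, hs, hts, hsσ⟩ := exists_mem_Ioo_of_tsSigma_lt (A := A ∩ Iic β)
      ⟨hβ, self_mem_Iic⟩ ht hlt
    exact (hsσ.trans_le (min_le_left _ _)).not_ge (tsSigma_le hs.1 hts)

theorem tsSigma_tsRho (ht : t ∈ A) (hlt : tsRho A t < t) :
    tsSigma A (tsRho A t) = t := by
  refine (tsSigma_le ht hlt).antisymm (le_of_not_gt fun hσ => ?_)
  obtain ⟨s, hs, hρs, hst⟩ := exists_mem_Ioo_of_tsSigma_lt ht hlt hσ
  exact hρs.not_ge (le_tsRho hs hst)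

end Jump

namespace IsTimeScale

variable {A : Set ℝ} {a b s t : ℝ}

theorem subset_Icc (h : IsTimeScale A a b) : A ⊆ Icc a b :=
  fun _ ht => ⟨h.isLeast.2 ht, h.isGreatest.2 ht⟩

theorem isCompact (h : IsTimeScale A a b) : IsCompact A :=
  isCompact_Icc.of_isClosed_subset h.isClosed h.subset_Icc

theorem tsTk_eq (h : IsTimeScale A a b) : tsTk A = A ∩ Iic (tsRho A b) := by
  ext t
  simp only [tsTk, h.isGreatest.csSup_eq, Set.mem_sdiff, mem_Ioc, mem_inter_iff, mem_Iic,
    not_and_or, not_lt]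
  exact and_congr_right fun ht => or_iff_left (not_not.2 (h.isGreatest.2 ht))

theorem mem_tsTk_of_lt (h : IsTimeScale A a b) (ht : t ∈ A) (htb : t < b) : t ∈ tsTk A :=
  h.tsTk_eq ▸ ⟨ht, le_tsRho ht htb⟩

theorem mem_tsTk_of_lt_tsSigma (h : IsTimeScale A a b) (ht : t ∈ A) (hσ : t < tsSigma A t) :
    t ∈ tsTk A :=
  h.mem_tsTk_of_lt ht (hσ.trans_le (h.isGreatest.2 (tsSigma_mem h.isClosed ht)))

theorem mem_tsTk_of_mem_closure (h : IsTimeScale A a b) (ht : t ∈ A)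
    (hcl : t ∈ closure (A ∩ Iio t)) : t ∈ tsTk A := by
  rcases (h.isGreatest.2 ht).lt_or_eq with htb | rfl
  exacts [h.mem_tsTk_of_lt ht htb, h.tsTk_eq ▸ ⟨ht, (tsRho_eq_of_mem_closure hcl).ge⟩]

theorem mem_tsTk_of_le (h : IsTimeScale A a b) (ht : t ∈ tsTk A) (hs : s ∈ A) (hst : s ≤ t) :
    s ∈ tsTk A := by
  rw [h.tsTk_eq] at ht ⊢
  exact ⟨hs, hst.trans ht.2⟩

theorem tsTk_mem_nhdsWithin (h : IsTimeScale A a b) (ht : t ∈ tsTk A) : tsTk A ∈ 𝓝[A] t := by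
  rcases (h.isGreatest.2 ht.1).lt_or_eq with htb | rfl
  · filter_upwards [self_mem_nhdsWithin, mem_nhdsWithin_of_mem_nhds (Iio_mem_nhds htb)]
      with s hs hsb
    exact h.mem_tsTk_of_lt hs hsb
  · filter_upwards [self_mem_nhdsWithin] with s hs
    exact h.mem_tsTk_of_le ht hs (h.isGreatest.2 hs)

theorem frequently_ne_tsSigma (h : IsTimeScale A a b) (hab : a < b) (ht : t ∈ tsTk A) :
    ∃ᶠ s in 𝓝[A] t, s ≠ tsSigma A t := by
  have of_closure {U : Set ℝ} (hU : t ∉ U) (hσ : tsSigma A t = t) (hcl : t ∈ closure (A ∩ U)) :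
      ∃ᶠ s in 𝓝[A] t, s ≠ tsSigma A t := by
    refine frequently_nhdsWithin_iff.2
      ((mem_closure_iff_frequently.1 hcl).mono fun s hs => ⟨?_, hs.1⟩)
    rw [hσ]
    exact ne_of_mem_of_not_mem hs.2 hU
  rcases (le_tsSigma A t).lt_or_eq with hσ | hσ
  · exact Frequently.filter_mono (frequently_pure.2 hσ.ne) (pure_le_nhdsWithin ht.1)
  rcases (h.isGreatest.2 ht.1).lt_or_eq with htb | rfl
  · exact of_closure self_notMem_Ioi hσ.symm (mem_closure_inter_Ioi h.isGreatest.1 htb hσ.symm)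
  · have hρ : tsRho A t = t := (tsRho_le A t).antisymm (h.tsTk_eq ▸ ht).2
    exact of_closure self_notMem_Iio hσ.symm (mem_closure_inter_Iio h.isLeast.1 hab hρ)

protected theorem tsTk (h : IsTimeScale A a b) : IsTimeScale (tsTk A) a (tsRho A b) := by
  have hρ : tsRho A b ∈ A := tsRho_mem h.isClosed h.isGreatest.1
  rw [h.tsTk_eq]
  exact ⟨h.isClosed.inter isClosed_Iic,
    ⟨⟨h.isLeast.1, h.isLeast.2 hρ⟩, fun s hs => h.isLeast.2 hs.1⟩,
    ⟨⟨hρ, mem_Iic.2 le_rfl⟩, fun s hs => hs.2⟩⟩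

theorem iterate_tsTk_and_eq (h : IsTimeScale A a b) (i : ℕ) :
    IsTimeScale (tsTk^[i] A) a ((tsRho A)^[i] b) ∧ tsTk^[i] A = A ∩ Iic ((tsRho A)^[i] b) := by
  induction i with
  | zero => exact ⟨h, (inter_eq_left.2 fun s hs => h.isGreatest.2 hs).symm⟩
  | succ i ih =>
    obtain ⟨hi, heq⟩ := ih
    have hρ : tsRho (tsTk^[i] A) ((tsRho A)^[i] b) = (tsRho A)^[i + 1] b := by
      rw [heq, tsRho_inter_Iic le_rfl, Function.iterate_succ_apply']
    rw [Function.iterate_succ_apply', ← hρ]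
    refine ⟨hi.tsTk, ?_⟩
    rw [hi.tsTk_eq]
    nth_rewrite 1 [heq]
    rw [inter_assoc, Iic_inter_Iic, min_eq_right (tsRho_le _ _)]

theorem iterate_tsTk (h : IsTimeScale A a b) (i : ℕ) :
    IsTimeScale (tsTk^[i] A) a ((tsRho A)^[i] b) :=
  (h.iterate_tsTk_and_eq i).1

theorem iterate_tsTk_eq (h : IsTimeScale A a b) (i : ℕ) :
    tsTk^[i] A = A ∩ Iic ((tsRho A)^[i] b) :=
  (h.iterate_tsTk_and_eq i).2

theorem card_le_card_filter_le_iterate_tsRho (h : IsTimeScale A a b) {s : Finset ℝ}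
    (hs : ↑s ⊆ A) (i : ℕ) : s.card ≤ (s.filter (· ≤ (tsRho A)^[i] b)).card + i := by
  induction i with
  | zero => exact (congrArg _ (Finset.filter_true_of_mem fun t ht => h.isGreatest.2 (hs ht))).ge
  | succ i ih =>
    have hsub : s.filter (· ≤ (tsRho A)^[i] b) ⊆
        insert ((tsRho A)^[i] b) (s.filter (· ≤ (tsRho A)^[i + 1] b)) := by
      intro t ht
      obtain ⟨hts, hle⟩ := Finset.mem_filter.1 ht
      rcases hle.lt_or_eq with hlt | rfl
      · rw [Function.iterate_succ_apply']
        exact Finset.mem_insert_of_mem (Finset.mem_filter.2 ⟨hts, le_tsRho (hs hts) hlt⟩)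
      · exact Finset.mem_insert_self _ _
    have := (Finset.card_le_card hsub).trans (Finset.card_insert_le _ _)
    omega

theorem lt_iterate_tsRho (h : IsTimeScale A a b) {m : ℕ} {s : Finset ℝ} (hs : ↑s ⊆ A)
    (hcard : m + 2 ≤ s.card) : a < (tsRho A)^[m] b := by
  have hle := h.card_le_card_filter_le_iterate_tsRho hs m
  obtain ⟨t, ht, hta⟩ := Finset.exists_mem_ne (a := a)
    (show 1 < (s.filter (· ≤ (tsRho A)^[m] b)).card by omega)
  obtain ⟨hts, htb⟩ := Finset.mem_filter.1 ht
  exact (lt_of_le_of_ne (h.isLeast.2 (hs hts)) hta.symm).trans_le htb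

theorem induction (h : IsTimeScale A a b) {P : ℝ → Prop} (base : P a)
    (rightScattered : ∀ t ∈ A, t < tsSigma A t → P t → P (tsSigma A t))
    (rightDense : ∀ t ∈ A, tsSigma A t = t → P t → ∀ᶠ s in 𝓝[A] t, t < s → P s)
    (leftDense : ∀ t ∈ A, t ∈ closure (A ∩ Iio t) → (∀ s ∈ A, s < t → P s) → P t) :
    ∀ t ∈ A, P t := by
  by_contra! hbad
  set B : Set ℝ := {t | t ∈ A ∧ ¬P t}
  have hBbdd : BddBelow B := ⟨a, fun t ht => h.isLeast.2 ht.1⟩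
  obtain ⟨u, hu⟩ : ∃ u, u = sInf B := ⟨_, rfl⟩
  have huB : u ∈ closure B := hu ▸ csInf_mem_closure hbad hBbdd
  have huA : u ∈ A := h.isClosed.closure_subset_iff.2 (fun t ht => ht.1) huB
  have hlt : ∀ s ∈ A, s < u → P s := fun s hs hsu =>
    by_contra fun hPs => notMem_of_lt_csInf (hu ▸ hsu) hBbdd ⟨hs, hPs⟩
  have hPu : P u := by
    rcases (h.isLeast.2 huA).eq_or_lt with rfl | hau
    · exact base
    rcases (tsRho_le A u).lt_or_eq with hρ | hρ
    · have hσ : tsSigma A (tsRho A u) = u := tsSigma_tsRho huA hρ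
      have hmem : tsRho A u ∈ A := tsRho_mem h.isClosed huA
      exact hσ ▸ rightScattered _ hmem (hρ.trans_eq hσ.symm) (hlt _ hmem hρ)
    · exact leftDense u huA (mem_closure_inter_Iio h.isLeast.1 hau hρ) hlt
  have hgt : ∀ t ∈ B, u < t := fun t ht =>
    (hu ▸ csInf_le hBbdd ht).lt_of_ne fun hut => ht.2 (hut ▸ hPu)
  rcases (le_tsSigma A u).lt_or_eq with hσ | hσ
  · have hle : tsSigma A u ≤ u :=
      (le_csInf hbad fun t ht => tsSigma_le ht.1 (hgt t ht)).trans_eq hu.symm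
    exact hσ.not_ge hle
  · have hev := eventually_nhdsWithin_iff.1 (rightDense u huA hσ.symm hPu)
    obtain ⟨t, ht, hPt⟩ := ((mem_closure_iff_frequently.1 huB).and_eventually hev).exists
    exact ht.2 (hPt ht.1 (hgt t ht))

end IsTimeScale

theorem isTimeScale_Icc_inter {S : Set ℝ} {a b : ℝ} (hS : IsClosed S) (ha : a ∈ S) (hb : b ∈ S)
    (hab : a ≤ b) : IsTimeScale (Icc a b ∩ S) a b where
  isClosed := isClosed_Icc.inter hS
  isLeast := ⟨⟨left_mem_Icc.2 hab, ha⟩, fun _ hs => hs.1.1⟩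
  isGreatest := ⟨⟨right_mem_Icc.2 hab, hb⟩, fun _ hs => hs.1.2⟩

theorem IsTimeScale.iterate_tsTk_Icc_inter {S : Set ℝ} {a b : ℝ}
    (h : IsTimeScale (Icc a b ∩ S) a b) (m : ℕ) :
    tsTk^[m] (Icc a b ∩ S) = Icc a ((tsRho (Icc a b ∩ S))^[m] b) ∩ S := by
  have hβb : (tsRho (Icc a b ∩ S))^[m] b ≤ b :=
    h.isGreatest.2 (h.iterate_tsTk_eq m ▸ (h.iterate_tsTk m).isGreatest.1).1
  have hIcc : Icc a b ∩ Iic ((tsRho (Icc a b ∩ S))^[m] b) = Icc a ((tsRho (Icc a b ∩ S))^[m] b) :=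
    Set.ext fun t => ⟨fun ht => ⟨ht.1.1, ht.2⟩, fun ht => ⟨⟨ht.1, ht.2.trans hβb⟩, ht.2⟩⟩
  rw [h.iterate_tsTk_eq, inter_right_comm, hIcc]

section DeltaDerivative

variable {E F : Type*} [NormedAddCommGroup E] [NormedSpace ℝ E] [NormedAddCommGroup F]
  [NormedSpace ℝ F] {S : Set ℝ} {f g : ℝ → E} {t : ℝ} {d d₁ d₂ : E}

theorem deltaDiffAt_iff_isLittleO :
    deltaDiffAt S f t d ↔
      (fun s => f (tsSigma S t) - f s - (tsSigma S t - s) • d) =o[𝓝[S] t]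
        (fun s => tsSigma S t - s) := by
  simp only [Asymptotics.isLittleO_iff,
    (nhdsWithin_hasBasis (nhds_basis_Ioo_pos t) S).eventually_iff, deltaDiffAt,
    Real.norm_eq_abs, inter_comm S, gt_iff_lt]

namespace deltaDiffAt

theorem apply_tsSigma (hf : deltaDiffAt S f t d) (ht : t ∈ S) :
    f (tsSigma S t) = f t + (tsSigma S t - t) • d := by
  have hpure := (deltaDiffAt_iff_isLittleO.1 hf).mono (pure_le_nhdsWithin ht)
  rw [Asymptotics.isLittleO_pure, sub_sub, sub_eq_zero] at hpure
  exact hpure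

theorem continuousWithinAt (hf : deltaDiffAt S f t d) (ht : t ∈ S) : ContinuousWithinAt f S t := by
  have hid : Tendsto (fun s => tsSigma S t - s) (𝓝[S] t) (𝓝 (tsSigma S t - t)) :=
    tendsto_const_nhds.sub (tendsto_id.mono_left nhdsWithin_le_nhds)
  have hrem := (Asymptotics.isLittleO_one_iff ℝ).1
    ((deltaDiffAt_iff_isLittleO.1 hf).trans_isBigO (hid.isBigO_one ℝ))
  have hlim := (tendsto_const_nhds (x := f (tsSigma S t))).sub ((hid.smul_const d).add hrem)
  rw [hf.apply_tsSigma ht] at hlim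
  simpa [ContinuousWithinAt] using hlim

theorem congr (hf : deltaDiffAt S f t d) (ht : tsSigma S t ∈ S) (hfg : EqOn f g S) :
    deltaDiffAt S g t d := by
  intro ε hε
  obtain ⟨δ, hδ, hle⟩ := hf ε hε
  exact ⟨δ, hδ, fun s hs => hfg ht ▸ hfg hs.1 ▸ hle s hs⟩

theorem add (hf : deltaDiffAt S f t d₁) (hg : deltaDiffAt S g t d₂) :
    deltaDiffAt S (fun s => f s + g s) t (d₁ + d₂) := by
  rw [deltaDiffAt_iff_isLittleO] at *
  refine (hf.add hg).congr_left fun s => ?_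
  rw [smul_add]
  abel

theorem clm_comp (ℓ : E →L[ℝ] F) (hf : deltaDiffAt S f t d) :
    deltaDiffAt S (fun s => ℓ (f s)) t (ℓ d) := by
  rw [deltaDiffAt_iff_isLittleO] at *
  refine ((ℓ.isBigO_comp _ _).trans_isLittleO hf).congr_left fun s => ?_
  simp only [map_sub, map_smul]

theorem sum {ι : Type*} (I : Finset ι) {f : ι → ℝ → E} {d : ι → E}
    (hf : ∀ i ∈ I, deltaDiffAt S (f i) t (d i)) :
    deltaDiffAt S (fun s => ∑ i ∈ I, f i s) t (∑ i ∈ I, d i) := by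
  simp only [deltaDiffAt_iff_isLittleO] at *
  refine (Asymptotics.IsLittleO.sum hf).congr_left fun s => ?_
  simp only [Finset.sum_apply, Finset.sum_sub_distrib, Finset.smul_sum]

theorem smul {φ : ℝ → ℝ} {φ' : ℝ} (hφ : deltaDiffAt S φ t φ') (hf : deltaDiffAt S f t d)
    (ht : t ∈ S) :
    deltaDiffAt S (fun s => φ s • f s) t (φ' • f (tsSigma S t) + φ t • d) := by
  have hφt : Tendsto φ (𝓝[S] t) (𝓝 (φ t)) := hφ.continuousWithinAt ht
  have hφd : Tendsto (fun s => (φ s - φ t) • d) (𝓝[S] t) (𝓝 0) := by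
    simpa using (hφt.sub_const (φ t)).smul_const d
  have h₁ := deltaDiffAt_iff_isLittleO.1
    (hφ.clm_comp (ContinuousLinearMap.toSpanSingleton ℝ (f (tsSigma S t))))
  have h₂ := (hφt.isBigO_one ℝ).smul_isLittleO (deltaDiffAt_iff_isLittleO.1 hf)
  have h₃ := (Asymptotics.isBigO_refl (fun s => tsSigma S t - s) (𝓝[S] t)).smul_isLittleO
    ((Asymptotics.isLittleO_one_iff ℝ).2 hφd)
  simp only [smul_eq_mul, one_mul, mul_one] at h₂ h₃
  rw [deltaDiffAt_iff_isLittleO]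
  refine ((h₁.add h₂).add h₃).congr_left fun s => ?_
  simp only [ContinuousLinearMap.toSpanSingleton_apply]
  module

end deltaDiffAt

theorem deltaDiffAt_of_lt_tsSigma (hf : ContinuousWithinAt f S t) (ht : t < tsSigma S t)
    (hd : f (tsSigma S t) = f t + (tsSigma S t - t) • d) : deltaDiffAt S f t d := by
  rw [deltaDiffAt_iff_isLittleO]
  have hid : Tendsto (fun s => tsSigma S t - s) (𝓝[S] t) (𝓝 (tsSigma S t - t)) :=
    tendsto_const_nhds.sub (tendsto_id.mono_left nhdsWithin_le_nhds)
  have hrem := (tendsto_const_nhds (x := f (tsSigma S t))).sub hf |>.sub (hid.smul_const d)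
  rw [hd, add_sub_cancel_left, sub_self, ← hd] at hrem
  refine ((Asymptotics.isLittleO_one_iff ℝ).2 hrem).trans_isBigO ?_
  refine (Asymptotics.isBigO_const_left_iff_pos_le_norm one_ne_zero).2
    ⟨_, half_pos (sub_pos.2 ht), ?_⟩
  filter_upwards [hid.eventually_const_lt (half_lt_self (sub_pos.2 ht))] with s hs
  exact hs.le.trans (le_abs_self _)

theorem IsTimeScale.deltaDiffAt_unique {a b : ℝ} (h : IsTimeScale S a b) (hab : a < b)
    (ht : t ∈ tsTk S) (h₁ : deltaDiffAt S f t d₁) (h₂ : deltaDiffAt S f t d₂) : d₁ = d₂ := by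
  by_contra hne
  have hpos : 0 < ‖d₁ - d₂‖ := norm_sub_pos_iff.2 hne
  have hrem := (deltaDiffAt_iff_isLittleO.1 h₂).sub (deltaDiffAt_iff_isLittleO.1 h₁)
  obtain ⟨s, hs, hle⟩ :=
    ((h.frequently_ne_tsSigma hab ht).and_eventually (hrem.def (half_pos hpos))).exists
  rw [sub_sub_sub_cancel_left, ← smul_sub, norm_smul, mul_comm] at hle
  have hs' : 0 < ‖tsSigma S t - s‖ := norm_sub_pos_iff.2 hs.symm
  exact (mul_lt_mul_of_pos_right (half_lt_self hpos) hs').not_ge hle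

theorem IsTimeScale.norm_sub_le_of_deltaDiffAt_zero {a b ε : ℝ} (h : IsTimeScale S a b)
    (hf : ∀ t ∈ tsTk S, deltaDiffAt S f t 0) (hε : 0 < ε) :
    ∀ t ∈ S, ‖f t - f a‖ ≤ ε * (t - a) := by
  refine h.induction (by simp) (fun t ht hσ hle => ?_) (fun t ht hσ hle => ?_)
    fun t ht hcl hlt => ?_
  · rw [(hf t (h.mem_tsTk_of_lt_tsSigma ht hσ)).apply_tsSigma ht, smul_zero, add_zero]
    exact hle.trans (by gcongr)
  · rcases (h.isGreatest.2 ht).lt_or_eq with htb | rfl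
    · have hrem := (deltaDiffAt_iff_isLittleO.1 (hf t (h.mem_tsTk_of_lt ht htb))).def hε
      filter_upwards [hrem] with s hs hts
      rw [hσ, smul_zero, sub_zero, norm_sub_rev, norm_sub_rev t, Real.norm_of_nonneg
        (sub_nonneg.2 hts.le)] at hs
      calc ‖f s - f a‖ ≤ ‖f s - f t‖ + ‖f t - f a‖ := norm_sub_le_norm_sub_add_norm_sub _ _ _
        _ ≤ ε * (s - t) + ε * (t - a) := add_le_add hs hle
        _ = ε * (s - a) := by ring
    · filter_upwards [self_mem_nhdsWithin] with s hs hts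
      exact absurd (h.isGreatest.2 hs) hts.not_ge
  · have := mem_closure_iff_nhdsWithin_neBot.1 hcl
    have hcont : Tendsto f (𝓝[S ∩ Iio t] t) (𝓝 (f t)) :=
      ((hf t (h.mem_tsTk_of_mem_closure ht hcl)).continuousWithinAt ht).mono inter_subset_left
    refine le_of_tendsto (hcont.sub_const (f a)).norm ?_
    filter_upwards [self_mem_nhdsWithin] with s hs
    exact (hlt s hs.1 hs.2).trans (by gcongr; exact le_of_lt hs.2)

theorem IsTimeScale.eq_of_deltaDiffAt_zero {a b : ℝ} (h : IsTimeScale S a b)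
    (hf : ∀ t ∈ tsTk S, deltaDiffAt S f t 0) (ht : t ∈ S) : f t = f a := by
  have hlim : Tendsto (fun ε : ℝ => ε * (t - a)) (𝓝[>] 0) (𝓝 0) := by
    simpa using (tendsto_id.mono_left (nhdsWithin_le_nhds (a := (0 : ℝ)))).mul_const (t - a)
  have hle : ‖f t - f a‖ ≤ 0 := ge_of_tendsto hlim <| by
    filter_upwards [self_mem_nhdsWithin] with ε hε
    exact h.norm_sub_le_of_deltaDiffAt_zero hf hε t ht
  exact sub_eq_zero.1 (norm_le_zero_iff.1 hle)

end DeltaDerivative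

theorem stronglyMeasurable_of_continuousWithinAt_Ioi {E : Type*} [TopologicalSpace E]
    [TopologicalSpace.PseudoMetrizableSpace E] {h : ℝ → E}
    (hh : ∀ x, ContinuousWithinAt h (Ioi x) x) : StronglyMeasurable h := by
  set u : ℕ → ℝ → ℝ := fun k x => ((⌊x * (k + 1)⌋ : ℝ) + 1) / (k + 1)
  have hlt (k : ℕ) (x : ℝ) : x < u k x := by
    rw [lt_div_iff₀ (by positivity)]
    exact Int.lt_floor_add_one _
  have hle (k : ℕ) (x : ℝ) : u k x ≤ x + 1 / (k + 1) := by
    have hk : (0 : ℝ) < k + 1 := by positivity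
    rw [div_le_iff₀ hk, add_mul, one_div_mul_cancel hk.ne']
    gcongr
    exact Int.floor_le _
  have hmeas (k : ℕ) : StronglyMeasurable fun x => h (u k x) :=
    (StronglyMeasurable.of_discrete (f := fun z : ℤ => h (((z : ℝ) + 1) / (k + 1)))).comp_measurable
      (Int.measurable_floor.comp (measurable_id.mul_const _))
  refine stronglyMeasurable_of_tendsto atTop hmeas (tendsto_pi_nhds.2 fun x => ?_)
  refine (hh x).tendsto.comp
    (tendsto_nhdsWithin_iff.2 ⟨?_, Eventually.of_forall fun k => hlt k x⟩)
  refine tendsto_of_tendsto_of_tendsto_of_le_of_le tendsto_const_nhds ?_ (fun k => (hlt k x).le)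
    fun k => hle k x
  simpa using tendsto_const_nhds.add (tendsto_one_div_add_atTop_nhds_zero_nat (𝕜 := ℝ))

/-- The last point of the time scale `A` that is not after `x`. Composing with it extends a
function on `A` to the interval spanned by `A`, constantly across each gap; this turns delta
integrals into Lebesgue integrals. -/
def tsFloor (A : Set ℝ) (x : ℝ) : ℝ := sSup (A ∩ Iic x)

section Floor

variable {A : Set ℝ} {a b t u x β : ℝ}

theorem tsFloor_eq (ht : t ∈ A) (htx : t ≤ x) (hub : ∀ u ∈ A, u ≤ x → u ≤ t) : tsFloor A x = t :=
  IsGreatest.csSup_eq ⟨⟨ht, htx⟩, fun u hu => hub u hu.1 hu.2⟩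

theorem tsFloor_of_mem_Ico (ht : t ∈ A) (hx : x ∈ Ico t (tsSigma A t)) : tsFloor A x = t :=
  tsFloor_eq ht hx.1 fun _ hu hux =>
    le_of_not_gt fun htu => (hx.2.trans_le (tsSigma_le hu htu)).not_ge hux

theorem tsFloor_inter_Iic (hx : x ≤ β) : tsFloor (A ∩ Iic β) x = tsFloor A x := by
  rw [tsFloor, tsFloor, inter_assoc, Iic_inter_Iic, min_eq_right hx]

namespace IsTimeScale

theorem isGreatest_tsFloor (h : IsTimeScale A a b) (hx : a ≤ x) :
    IsGreatest (A ∩ Iic x) (tsFloor A x) :=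
  have hbdd : BddAbove (A ∩ Iic x) := ⟨x, fun _ hs => hs.2⟩
  ⟨(h.isClosed.inter isClosed_Iic).csSup_mem ⟨a, h.isLeast.1, hx⟩ hbdd,
    fun _ hs => le_csSup hbdd hs⟩

theorem tsFloor_mem (h : IsTimeScale A a b) (hx : a ≤ x) : tsFloor A x ∈ A :=
  (h.isGreatest_tsFloor hx).1.1

theorem tsFloor_le (h : IsTimeScale A a b) (hx : a ≤ x) : tsFloor A x ≤ x :=
  (h.isGreatest_tsFloor hx).1.2

theorem le_tsFloor (h : IsTimeScale A a b) (hu : u ∈ A) (hux : u ≤ x) : u ≤ tsFloor A x :=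
  (h.isGreatest_tsFloor ((h.isLeast.2 hu).trans hux)).2 ⟨hu, hux⟩

theorem tsFloor_mem_tsTk (h : IsTimeScale A a b) (hx : x ∈ Ico a b) : tsFloor A x ∈ tsTk A :=
  h.mem_tsTk_of_lt (h.tsFloor_mem hx.1) ((h.tsFloor_le hx.1).trans_lt hx.2)

theorem lt_tsSigma_tsFloor_or_eq (h : IsTimeScale A a b) (hx : x ∈ Ico a b) :
    x < tsSigma A (tsFloor A x) ∨ tsFloor A x = x ∧ tsSigma A x = x := by
  refine or_iff_not_imp_left.2 fun hσ => ?_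
  have hmem := h.tsFloor_mem hx.1
  have hfix : tsSigma A (tsFloor A x) = tsFloor A x :=
    (h.le_tsFloor (tsSigma_mem h.isClosed hmem) (not_lt.1 hσ)).antisymm (le_tsSigma _ _)
  have heq : tsFloor A x = x := by
    refine (h.tsFloor_le hx.1).eq_or_lt.resolve_right fun hlt => ?_
    obtain ⟨u, hu, htu, hux⟩ :=
      exists_mem_Ioo_of_tsSigma_lt h.isGreatest.1 (hlt.trans hx.2) (hfix.trans_lt hlt)
    exact htu.not_ge (h.le_tsFloor hu hux.le)
  exact ⟨heq, heq ▸ hfix⟩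

theorem tendsto_tsFloor (h : IsTimeScale A a b) (ht : t ∈ A) :
    Tendsto (tsFloor A) (𝓝[>] t) (𝓝[A] t) := by
  have hlt : ∀ᶠ x in 𝓝[>] t, t < x := self_mem_nhdsWithin
  have hax := fun x (hx : t < x) => (h.isLeast.2 ht).trans hx.le
  refine tendsto_nhdsWithin_iff.2 ⟨tendsto_of_tendsto_of_tendsto_of_le_of_le' tendsto_const_nhds
    (tendsto_id.mono_left nhdsWithin_le_nhds) ?_ ?_, ?_⟩ <;> filter_upwards [hlt] with x hx
  exacts [h.le_tsFloor ht hx.le, h.tsFloor_le (hax x hx), h.tsFloor_mem (hax x hx)]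

end IsTimeScale

end Floor

/-- Functions that can be delta integrated over the time scale `A`: rd-continuity on `A^k`, with
right-density measured in `A` rather than in `A^k`. A point of `A^k` that is right-scattered in `A`
is not constrained from the right, so `f ∘ tsSigma A` is an integrand for continuous `f`, although
it need not be rd-continuous on `A^k`. -/
def DeltaIntegrand {E : Type*} [NormedAddCommGroup E] (A : Set ℝ) (f : ℝ → E) : Prop :=
  ∀ t ∈ tsTk A, (tsSigma A t = t → ContinuousWithinAt f A t) ∧
    ∃ l : E, Tendsto f (𝓝[A ∩ Iio t] t) (𝓝 l)

section Integrand

variable {E F : Type*} [NormedAddCommGroup E] [NormedAddCommGroup F] {A : Set ℝ} {a b t : ℝ}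
  {f g : ℝ → E}

namespace IsTimeScale

theorem deltaIntegrand_of_continuousOn_tsTk (h : IsTimeScale A a b)
    (hf : ContinuousOn f (tsTk A)) : DeltaIntegrand A f := by
  intro t ht
  have hft := (hf t ht).mono_of_mem_nhdsWithin (h.tsTk_mem_nhdsWithin ht)
  exact ⟨fun _ => hft, f t, hft.mono inter_subset_left⟩

theorem tsSigma_tsTk_eq (h : IsTimeScale A a b) (ht : t ∈ tsTk A) (hσ : tsSigma A t = t) :
    tsSigma (tsTk A) t = t := by
  by_contra hne
  have hlt := (le_tsSigma (tsTk A) t).lt_of_ne' hne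
  have hmem := tsSigma_mem h.tsTk.isClosed ht
  obtain ⟨s, hs, hts, hsσ⟩ := exists_mem_Ioo_of_tsSigma_lt hmem.1 hlt (hσ.trans_lt hlt)
  exact hsσ.not_ge (tsSigma_le (h.mem_tsTk_of_le hmem hs hsσ.le) hts)

theorem deltaIntegrand_of_rdContinuousOn (h : IsTimeScale A a b)
    (hf : RdContinuousOn (tsTk A) f) : DeltaIntegrand A f := by
  intro t ht
  have hset : tsTk A ∩ Iio t = A ∩ Iio t :=
    Subset.antisymm (fun s hs => ⟨hs.1.1, hs.2⟩)
      fun s hs => ⟨h.mem_tsTk_of_le ht hs.1 (le_of_lt hs.2), hs.2⟩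
  refine ⟨fun hσ => ((hf t ht).1 (h.tsSigma_tsTk_eq ht hσ)).mono_of_mem_nhdsWithin
    (h.tsTk_mem_nhdsWithin ht), ?_⟩
  rw [← hset]
  by_cases hcl : t ∈ closure (tsTk A ∩ Iio t)
  · exact (hf t ht).2 (tsRho_eq_of_mem_closure hcl)
  · rw [mem_closure_iff_nhdsWithin_neBot, not_neBot] at hcl
    exact ⟨0, hcl ▸ tendsto_bot⟩

theorem tendsto_tsSigma_of_rightDense (h : IsTimeScale A a b) (ht : t ∈ A)
    (hσ : tsSigma A t = t) : Tendsto (tsSigma A) (𝓝[A] t) (𝓝[A] t) := by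
  refine tendsto_nhdsWithin_iff.2 ⟨tendsto_order.2 ⟨fun y hy => ?_, fun y hy => ?_⟩, ?_⟩
  · filter_upwards [mem_nhdsWithin_of_mem_nhds (Ioi_mem_nhds hy)] with s hs
    exact hs.trans_le (le_tsSigma A s)
  · rcases (h.isGreatest.2 ht).lt_or_eq with htb | rfl
    · obtain ⟨u, hu, htu, huy⟩ :=
        exists_mem_Ioo_of_tsSigma_lt h.isGreatest.1 htb (hσ.trans_lt hy)
      filter_upwards [mem_nhdsWithin_of_mem_nhds (Iio_mem_nhds htu)] with s hs
      exact (tsSigma_le hu hs).trans_lt huy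
    · filter_upwards [self_mem_nhdsWithin] with s hs
      exact (h.isGreatest.2 (tsSigma_mem h.isClosed hs)).trans_lt hy
  · filter_upwards [self_mem_nhdsWithin] with s hs using tsSigma_mem h.isClosed hs

theorem tendsto_tsSigma_left (h : IsTimeScale A a b) (ht : t ∈ A) :
    Tendsto (tsSigma A) (𝓝[A ∩ Iio t] t) (𝓝[A] t) := by
  refine tendsto_nhdsWithin_iff.2 ⟨tendsto_of_tendsto_of_tendsto_of_le_of_le'
    (tendsto_id.mono_left nhdsWithin_le_nhds) tendsto_const_nhds ?_ ?_, ?_⟩ <;>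
    filter_upwards [self_mem_nhdsWithin] with s hs
  exacts [le_tsSigma A s, tsSigma_le ht hs.2, tsSigma_mem h.isClosed hs.1]

theorem deltaIntegrand_comp_tsSigma (h : IsTimeScale A a b) (hf : ContinuousOn f A) :
    DeltaIntegrand A (fun t => f (tsSigma A t)) := by
  intro t ht
  refine ⟨fun hσ => ?_, f t, (hf t ht.1).tendsto.comp (h.tendsto_tsSigma_left ht.1)⟩
  rw [ContinuousWithinAt, hσ]
  exact (hf t ht.1).tendsto.comp (h.tendsto_tsSigma_of_rightDense ht.1 hσ)

end IsTimeScale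

namespace DeltaIntegrand

theorem prodMk {g : ℝ → F} (hf : DeltaIntegrand A f) (hg : DeltaIntegrand A g) :
    DeltaIntegrand A (fun t => (f t, g t)) := by
  intro t ht
  obtain ⟨l, hl⟩ := (hf t ht).2
  obtain ⟨m, hm⟩ := (hg t ht).2
  exact ⟨fun hσ => ((hf t ht).1 hσ).prodMk ((hg t ht).1 hσ), (l, m), hl.prodMk_nhds hm⟩

theorem pi {ι : Type*} [Fintype ι] {f : ι → ℝ → E} (hf : ∀ i, DeltaIntegrand A (f i)) :
    DeltaIntegrand A (fun t i => f i t) := by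
  intro t ht
  choose l hl using fun i => (hf i t ht).2
  exact ⟨fun hσ => continuousWithinAt_pi.2 fun i => (hf i t ht).1 hσ, l, tendsto_pi_nhds.2 hl⟩

theorem comp {Φ : ℝ × E → F} (hΦ : ContinuousOn Φ (A ×ˢ univ)) (hf : DeltaIntegrand A f) :
    DeltaIntegrand A (fun t => Φ (t, f t)) := by
  intro t ht
  have hmem {B : Set ℝ} (hB : B ⊆ A) : ∀ᶠ s in 𝓝[B] t, (s, f s) ∈ A ×ˢ (univ : Set E) :=
    eventually_nhdsWithin_of_forall fun s hs => ⟨hB hs, mem_univ _⟩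
  obtain ⟨l, hl⟩ := (hf t ht).2
  refine ⟨fun hσ => (hΦ (t, f t) ⟨ht.1, mem_univ _⟩).tendsto.comp (tendsto_nhdsWithin_iff.2
    ⟨continuousWithinAt_id.prodMk ((hf t ht).1 hσ), hmem subset_rfl⟩), Φ (t, l), ?_⟩
  exact (hΦ (t, l) ⟨ht.1, mem_univ _⟩).tendsto.comp (tendsto_nhdsWithin_iff.2
    ⟨(tendsto_id.mono_left nhdsWithin_le_nhds).prodMk_nhds hl, hmem inter_subset_left⟩)

theorem continuous_comp {Φ : E → F} (hΦ : Continuous Φ) (hf : DeltaIntegrand A f) :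
    DeltaIntegrand A (fun t => Φ (f t)) :=
  comp (Φ := fun p => Φ p.2) (hΦ.comp continuous_snd).continuousOn hf

theorem add (hf : DeltaIntegrand A f) (hg : DeltaIntegrand A g) :
    DeltaIntegrand A (fun t => f t + g t) :=
  (hf.prodMk hg).continuous_comp continuous_add

theorem neg (hf : DeltaIntegrand A f) : DeltaIntegrand A (fun t => -f t) :=
  hf.continuous_comp continuous_neg

theorem smul [NormedSpace ℝ E] {φ : ℝ → ℝ} (hφ : DeltaIntegrand A φ) (hf : DeltaIntegrand A f) :
    DeltaIntegrand A (fun t => φ t • f t) :=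
  (hφ.prodMk hf).continuous_comp continuous_smul

theorem sum {ι : Type*} (I : Finset ι) {f : ι → ℝ → E} (hf : ∀ i ∈ I, DeltaIntegrand A (f i)) :
    DeltaIntegrand A (fun t => ∑ i ∈ I, f i t) := by
  intro t ht
  choose! l hl using fun i hi => (hf i hi t ht).2
  exact ⟨fun hσ => tendsto_finsetSum I fun i hi => (hf i hi t ht).1 hσ, _,
    tendsto_finsetSum I hl⟩

theorem tendsto_right (hf : DeltaIntegrand A f) (ht : t ∈ tsTk A) :
    Tendsto f (𝓝[A ∩ Ioi t] t) (𝓝 (f t)) := by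
  by_cases hcl : t ∈ closure (A ∩ Ioi t)
  · exact ((hf t ht).1 (tsSigma_eq_of_mem_closure hcl)).mono inter_subset_left
  · rw [mem_closure_iff_nhdsWithin_neBot, not_neBot] at hcl
    exact hcl ▸ tendsto_bot

theorem totallyBounded_image (h : IsTimeScale A a b) (hf : DeltaIntegrand A f) :
    TotallyBounded (f '' tsTk A) := by
  refine Metric.totallyBounded_iff.2 fun ε hε => ?_
  refine h.tsTk.isCompact.induction_on
    (p := fun s => ∃ c : Set E, c.Finite ∧ f '' s ⊆ ⋃ y ∈ c, Metric.ball y ε)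
    ⟨∅, finite_empty, by simp⟩ ?_ ?_ fun t ht => ?_
  · rintro s s' hs ⟨c, hc, hcover⟩
    exact ⟨c, hc, (image_mono hs).trans hcover⟩
  · rintro s s' ⟨c, hc, hcover⟩ ⟨c', hc', hcover'⟩
    refine ⟨c ∪ c', hc.union hc', ?_⟩
    rw [image_union, biUnion_union]
    exact union_subset_union hcover hcover'
  · obtain ⟨l, hl⟩ := (hf t ht).2
    have hleft := hl.eventually (Metric.ball_mem_nhds l hε)
    have hright := (hf.tendsto_right ht).eventually (Metric.ball_mem_nhds (f t) hε)
    refine ⟨{s | f s ∈ Metric.ball l ε ∪ Metric.ball (f t) ε}, ?_, {l, f t}, by simp, ?_⟩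
    · filter_upwards [self_mem_nhdsWithin,
        mem_nhdsWithin_of_mem_nhds (eventually_nhdsWithin_iff.1 hleft),
        mem_nhdsWithin_of_mem_nhds (eventually_nhdsWithin_iff.1 hright)] with s hs hsl hsr
      rcases lt_trichotomy s t with hst | rfl | hts
      exacts [Or.inl (hsl ⟨hs.1, hst⟩), Or.inr (Metric.mem_ball_self hε), Or.inr (hsr ⟨hs.1, hts⟩)]
    · rintro _ ⟨s, hs, rfl⟩
      simpa using hs

theorem exists_norm_le (h : IsTimeScale A a b) (hf : DeltaIntegrand A f) :
    ∃ C, ∀ t ∈ tsTk A, ‖f t‖ ≤ C := by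
  obtain ⟨C, hC⟩ := (hf.totallyBounded_image h).isBounded.exists_norm_le
  exact ⟨C, fun t ht => hC _ (mem_image_of_mem f ht)⟩

theorem continuousWithinAt_comp_tsFloor (h : IsTimeScale A a b) (hf : DeltaIntegrand A f)
    (x : ℝ) : ContinuousWithinAt (fun x => f (tsFloor A x)) (Ioi x) x := by
  have of_eventually_eq (heq : ∀ᶠ y in 𝓝[>] x, tsFloor A y = tsFloor A x) :
      ContinuousWithinAt (fun x => f (tsFloor A x)) (Ioi x) x :=
    tendsto_const_nhds.congr' (heq.mono fun y hy => congrArg f hy.symm)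
  rcases lt_or_ge x a with hxa | hax
  · refine of_eventually_eq ?_
    have hempty {y : ℝ} (hy : y < a) : A ∩ Iic y = ∅ :=
      eq_empty_of_forall_notMem fun s hs => ((h.isLeast.2 hs.1).trans hs.2).not_gt hy
    filter_upwards [mem_nhdsWithin_of_mem_nhds (Iio_mem_nhds hxa)] with y hy
    rw [tsFloor, tsFloor, hempty hy, hempty hxa]
  rcases lt_or_ge x b with hxb | hbx
  · rcases h.lt_tsSigma_tsFloor_or_eq ⟨hax, hxb⟩ with hxσ | ⟨hfloor, hσ⟩
    · refine of_eventually_eq ?_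
      filter_upwards [self_mem_nhdsWithin, mem_nhdsWithin_of_mem_nhds (Iio_mem_nhds hxσ)]
        with y hxy hyσ
      exact tsFloor_of_mem_Ico (h.tsFloor_mem hax)
        ⟨(h.tsFloor_le hax).trans (le_of_lt hxy), hyσ⟩
    · have hxA : x ∈ A := hfloor ▸ h.tsFloor_mem hax
      have hfx := (hf x (h.mem_tsTk_of_lt hxA hxb)).1 hσ
      rw [ContinuousWithinAt, hfloor]
      exact hfx.tendsto.comp (h.tendsto_tsFloor hxA)
  · refine of_eventually_eq ?_
    have hmax {y : ℝ} (hy : b ≤ y) : tsFloor A y = b :=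
      tsFloor_eq h.isGreatest.1 hy fun u hu _ => h.isGreatest.2 hu
    filter_upwards [self_mem_nhdsWithin] with y hy
    rw [hmax hbx, hmax (hbx.trans (le_of_lt hy))]

theorem intervalIntegrable (h : IsTimeScale A a b) (hf : DeltaIntegrand A f) {s t : ℝ}
    (hs : s ∈ Icc a b) (ht : t ∈ Icc a b) :
    IntervalIntegrable (fun x => f (tsFloor A x)) volume s t := by
  have hab : a ≤ b := hs.1.trans hs.2
  obtain ⟨C, hC⟩ := hf.exists_norm_le h
  have hmeas := stronglyMeasurable_of_continuousWithinAt_Ioi (hf.continuousWithinAt_comp_tsFloor h)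
  have hint : IntervalIntegrable (fun x => f (tsFloor A x)) volume a b := by
    refine (intervalIntegrable_iff_integrableOn_Ico_of_le hab).2
      (Integrable.of_bound hmeas.aestronglyMeasurable C ?_)
    filter_upwards [ae_restrict_mem measurableSet_Ico] with x hx
    exact hC _ (h.tsFloor_mem_tsTk hx)
  exact hint.mono_set (uIcc_of_le hab ▸ uIcc_subset_Icc hs ht)

end DeltaIntegrand

end Integrand

/-- The delta integral `∫_s^t f Δξ` over the time scale `A`, encoded as the integral of the
extension of `f` that is constant on each gap `[t, σ(t))`. -/
def deltaIntegral {E : Type*} [NormedAddCommGroup E] [NormedSpace ℝ E]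
    (A : Set ℝ) (f : ℝ → E) (s t : ℝ) : E :=
  ∫ x in s..t, f (tsFloor A x)

section Integral

variable {E F : Type*} [NormedAddCommGroup E] [NormedSpace ℝ E] [NormedAddCommGroup F]
  [NormedSpace ℝ F] {A : Set ℝ} {a b c s t β : ℝ} {f g H : ℝ → E}

theorem deltaIntegral_self (A : Set ℝ) (f : ℝ → E) (s : ℝ) : deltaIntegral A f s s = 0 :=
  intervalIntegral.integral_same

theorem deltaIntegral_inter_Iic (hs : s ≤ β) (ht : t ≤ β) :
    deltaIntegral (A ∩ Iic β) f s t = deltaIntegral A f s t :=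
  intervalIntegral.integral_congr fun x hx => by
    simp only [tsFloor_inter_Iic (hx.2.trans (max_le hs ht))]

theorem deltaIntegral_tsSigma [CompleteSpace E] (f : ℝ → E) (ht : t ∈ A) :
    deltaIntegral A f t (tsSigma A t) = (tsSigma A t - t) • f t := by
  rw [deltaIntegral, ← intervalIntegral.integral_const]
  refine intervalIntegral.integral_congr_Ioo_of_le (le_tsSigma A t) fun x hx => ?_
  simp only [tsFloor_of_mem_Ico ht (Ioo_subset_Ico_self hx)]

namespace DeltaIntegrand

theorem deltaIntegral_add (h : IsTimeScale A a b) (hf : DeltaIntegrand A f)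
    (hg : DeltaIntegrand A g) (hs : s ∈ Icc a b) (ht : t ∈ Icc a b) :
    deltaIntegral A (fun t => f t + g t) s t = deltaIntegral A f s t + deltaIntegral A g s t :=
  intervalIntegral.integral_add (hf.intervalIntegrable h hs ht) (hg.intervalIntegrable h hs ht)

theorem deltaIntegral_sub (h : IsTimeScale A a b) (hf : DeltaIntegrand A f) (hc : c ∈ Icc a b)
    (hs : s ∈ Icc a b) (ht : t ∈ Icc a b) :
    deltaIntegral A f c t - deltaIntegral A f c s = deltaIntegral A f s t :=
  intervalIntegral.integral_interval_sub_left (hf.intervalIntegrable h hc ht)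
    (hf.intervalIntegrable h hc hs)

theorem continuousOn_deltaIntegral (h : IsTimeScale A a b) (hf : DeltaIntegrand A f)
    (hc : c ∈ Icc a b) : ContinuousOn (deltaIntegral A f c) A := by
  have hab : a ≤ b := hc.1.trans hc.2
  have hcont := intervalIntegral.continuousOn_primitive_interval'
    (hf.intervalIntegrable h (left_mem_Icc.2 hab) (right_mem_Icc.2 hab)) (uIcc_of_le hab ▸ hc)
  exact hcont.mono (uIcc_of_le hab ▸ h.subset_Icc)

theorem deltaDiffAt_deltaIntegral (h : IsTimeScale A a b) [CompleteSpace E]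
    (hf : DeltaIntegrand A f) (hc : c ∈ Icc a b) (ht : t ∈ tsTk A) :
    deltaDiffAt A (deltaIntegral A f c) t (f t) := by
  have htab := h.subset_Icc ht.1
  rcases (le_tsSigma A t).lt_or_eq with hσ | hσ
  · refine deltaDiffAt_of_lt_tsSigma (hf.continuousOn_deltaIntegral h hc t ht.1) hσ ?_
    rw [← deltaIntegral_tsSigma f ht.1, ← hf.deltaIntegral_sub h hc htab
      (h.subset_Icc (tsSigma_mem h.isClosed ht.1)), add_sub_cancel]
  intro ε hε
  obtain ⟨δ, hδ, hclose⟩ := Metric.continuousWithinAt_iff.1 ((hf t ht).1 hσ.symm) ε hε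
  refine ⟨δ, hδ, fun s hs => ?_⟩
  have hsab := h.subset_Icc hs.1
  rw [← hσ, hf.deltaIntegral_sub h hc hsab htab, deltaIntegral, ← intervalIntegral.integral_const,
    ← intervalIntegral.integral_sub (hf.intervalIntegrable h hsab htab) intervalIntegrable_const]
  refine intervalIntegral.norm_integral_le_of_norm_le_const fun x hx => ?_
  have hminA : min s t ∈ A := min_rec' (· ∈ A) hs.1 ht.1
  have hax : a ≤ x := (h.isLeast.2 hminA).trans hx.1.le
  have hfloor : tsFloor A x ∈ uIcc t s := uIcc_comm s t ▸
    ⟨h.le_tsFloor hminA hx.1.le, (h.tsFloor_le hax).trans hx.2⟩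
  rw [← dist_eq_norm]
  refine (hclose (h.tsFloor_mem hax) ?_).le
  exact (abs_sub_left_of_mem_uIcc hfloor).trans_lt (by grind)

theorem deltaIntegral_eq_sub (h : IsTimeScale A a b) [CompleteSpace E]
    (hf : DeltaIntegrand A f) (hH : ∀ t ∈ tsTk A, deltaDiffAt A H t (f t)) :
    deltaIntegral A f a b = H b - H a := by
  have hab : a ≤ b := h.isLeast.2 h.isGreatest.1
  have hzero : ∀ t ∈ tsTk A, deltaDiffAt A (fun t => H t + -deltaIntegral A f a t) t 0 :=
    fun t ht => by
      simpa using (hH t ht).add ((hf.deltaDiffAt_deltaIntegral h (left_mem_Icc.2 hab) ht).clm_comp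
        (-ContinuousLinearMap.id ℝ E))
  have heq := h.eq_of_deltaDiffAt_zero hzero h.isGreatest.1
  rw [deltaIntegral_self, neg_zero, add_zero] at heq
  rw [← heq, sub_add_cancel_left, neg_neg]

theorem deltaIntegral_clm_comp (h : IsTimeScale A a b) [CompleteSpace E] [CompleteSpace F]
    (hf : DeltaIntegrand A f) (ℓ : E →L[ℝ] F) (hs : s ∈ Icc a b) (ht : t ∈ Icc a b) :
    deltaIntegral A (fun t => ℓ (f t)) s t = ℓ (deltaIntegral A f s t) :=
  ℓ.intervalIntegral_comp_comm (hf.intervalIntegrable h hs ht)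

theorem eq_zero_of_deltaIntegral_eq_zero {f : ℝ → ℝ} (h : IsTimeScale A a b) (hab : a < b)
    (hf : DeltaIntegrand A f) (hnonneg : ∀ t ∈ tsTk A, 0 ≤ f t)
    (hzero : deltaIntegral A f a b = 0) :
    ∀ t ∈ tsTk A, f t = 0 := by
  have ha : a ∈ Icc a b := left_mem_Icc.2 hab.le
  have hb : b ∈ Icc a b := right_mem_Icc.2 hab.le
  have integral_nonneg {s t : ℝ} (hs : a ≤ s) (hst : s ≤ t) (ht : t ≤ b) :
      0 ≤ deltaIntegral A f s t := by
    rw [← @intervalIntegral.integral_zero ℝ _ _ s t]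
    exact intervalIntegral.integral_mono_on_of_le_Ioo hst intervalIntegrable_const
      (hf.intervalIntegrable h ⟨hs, hst.trans ht⟩ ⟨hs.trans hst, ht⟩)
      fun x hx => hnonneg _ (h.tsFloor_mem_tsTk ⟨hs.trans hx.1.le, hx.2.trans_le ht⟩)
  have hprim : EqOn (deltaIntegral A f a) 0 A := by
    intro t ht
    have htab := h.subset_Icc ht
    have hsub := hf.deltaIntegral_sub h ha htab hb
    have hright := integral_nonneg htab.1 htab.2 le_rfl
    exact le_antisymm (by simp only [Pi.zero_apply]; linarith)
      (integral_nonneg le_rfl htab.1 htab.2)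
  intro t ht
  refine h.deltaDiffAt_unique hab ht ((hf.deltaDiffAt_deltaIntegral h ha ht).congr
    (tsSigma_mem h.isClosed ht.1) hprim) ?_
  simp [deltaDiffAt_iff_isLittleO]

end DeltaIntegrand

end Integral

/-- `Y 0, …, Y r` are the successive delta derivatives of a function of class `C^r_rd(T)`, with
`Y i` living on `T^{k^i}`. -/
structure IsCrdTower {E : Type*} [NormedAddCommGroup E] [NormedSpace ℝ E]
    (T : Set ℝ) (r : ℕ) (Y : ℕ → ℝ → E) : Prop where
  deltaDiffAt : ∀ i < r, ∀ t ∈ tsTk^[i + 1] T, deltaDiffAt (tsTk^[i] T) (Y i) t (Y (i + 1) t)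
  rdContinuousOn : RdContinuousOn (tsTk^[r] T) (Y r)

section Tower

variable {E F : Type*} [NormedAddCommGroup E] [NormedAddCommGroup F] {S T A : Set ℝ} {a b : ℝ}
  {i j m r : ℕ}

theorem iterate_tsTk_subset_iterate_tsTk (hij : i ≤ j) : tsTk^[j] T ⊆ tsTk^[i] T :=
  Function.antitone_iterate_of_le_id (fun _ => sdiff_subset) hij T

namespace RdContinuousOn

variable {f g : ℝ → E}

theorem continuous_comp {Φ : E → F} (hΦ : Continuous Φ) (hf : RdContinuousOn S f) :
    RdContinuousOn S (fun t => Φ (f t)) := fun t ht =>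
  ⟨fun hσ => hΦ.continuousAt.comp_continuousWithinAt ((hf t ht).1 hσ), fun hρ =>
    let ⟨l, hl⟩ := (hf t ht).2 hρ
    ⟨Φ l, (hΦ.tendsto l).comp hl⟩⟩

theorem add (hf : RdContinuousOn S f) (hg : RdContinuousOn S g) :
    RdContinuousOn S (fun t => f t + g t) := fun t ht =>
  ⟨fun hσ => ((hf t ht).1 hσ).add ((hg t ht).1 hσ), fun hρ =>
    let ⟨l, hl⟩ := (hf t ht).2 hρ
    let ⟨k, hk⟩ := (hg t ht).2 hρ
    ⟨l + k, hl.add hk⟩⟩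

end RdContinuousOn

theorem rdContinuousOn_const (S : Set ℝ) (c : E) : RdContinuousOn S (fun _ => c) := fun _ _ =>
  ⟨fun _ => continuousWithinAt_const, fun _ => ⟨c, tendsto_const_nhds⟩⟩

variable [NormedSpace ℝ E] [NormedSpace ℝ F]

-- The weight vanishes at `max A^k`, the only point that can be right-dense in `A^k` but not in `A`.
theorem DeltaIntegrand.rdContinuousOn_weight_smul {f : ℝ → E} (h : IsTimeScale A a b)
    (hf : DeltaIntegrand A f) : RdContinuousOn (tsTk A) (fun t => (tsRho A b - t) • f t) := by
  have hweight (t : ℝ) : Tendsto (fun s => tsRho A b - s) (𝓝 t) (𝓝 (tsRho A b - t)) :=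
    tendsto_const_nhds.sub tendsto_id
  intro t ht
  refine ⟨fun hσ => ?_, fun _ => ?_⟩
  · rcases (h.tsTk.isGreatest.2 ht).lt_or_eq with htM | rfl
    · have hσA : tsSigma A t = t := by
        by_contra hne
        obtain ⟨s, hs, hts, hsσ⟩ := exists_mem_Ioo_of_tsSigma_lt h.tsTk.isGreatest.1 htM
          (hσ.trans_lt ((le_tsSigma A t).lt_of_ne' hne))
        exact hsσ.not_ge (tsSigma_le hs.1 hts)
      exact ((hweight t).mono_left nhdsWithin_le_nhds).smul
        (((hf t ht).1 hσA).mono sdiff_subset)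
    · obtain ⟨C, hC⟩ := hf.exists_norm_le h
      have hzero := (hweight (tsRho A b)).mono_left (nhdsWithin_le_nhds (s := tsTk A))
      rw [sub_self] at hzero
      rw [ContinuousWithinAt, sub_self, zero_smul]
      exact hzero.zero_smul_isBoundedUnder_le
        (isBoundedUnder_of_eventually_le (eventually_nhdsWithin_of_forall hC))
  · obtain ⟨l, hl⟩ := (hf t ht).2
    exact ⟨_, ((hweight t).mono_left nhdsWithin_le_nhds).smul
      (hl.mono_left (nhdsWithin_mono t (inter_subset_inter_left _ sdiff_subset)))⟩

namespace IsCrdTower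

variable {Y Z : ℕ → ℝ → E}

theorem add (hY : IsCrdTower T r Y) (hZ : IsCrdTower T r Z) :
    IsCrdTower T r (fun i t => Y i t + Z i t) :=
  ⟨fun i hi t ht => (hY.deltaDiffAt i hi t ht).add (hZ.deltaDiffAt i hi t ht),
    hY.rdContinuousOn.add hZ.rdContinuousOn⟩

theorem clm_comp (ℓ : E →L[ℝ] F) (hY : IsCrdTower T r Y) :
    IsCrdTower T r (fun i t => ℓ (Y i t)) :=
  ⟨fun i hi t ht => (hY.deltaDiffAt i hi t ht).clm_comp ℓ,
    hY.rdContinuousOn.continuous_comp ℓ.continuous⟩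

theorem deltaIntegrand (hT : IsTimeScale T a b) (hY : IsCrdTower T (m + 1) Y) (hi : i ≤ m + 1) :
    DeltaIntegrand (tsTk^[m] T) (Y i) := by
  have hA := hT.iterate_tsTk m
  rcases hi.lt_or_eq with hi | rfl
  · refine hA.deltaIntegrand_of_continuousOn_tsTk fun t ht => ?_
    rw [← Function.iterate_succ_apply' tsTk] at ht ⊢
    have ht' := iterate_tsTk_subset_iterate_tsTk hi ht
    exact ((hY.deltaDiffAt i hi t ht').continuousWithinAt
      (iterate_tsTk_subset_iterate_tsTk i.le_succ ht')).mono
      (iterate_tsTk_subset_iterate_tsTk hi.le)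
  · refine hA.deltaIntegrand_of_rdContinuousOn ?_
    rw [← Function.iterate_succ_apply' tsTk]
    exact hY.rdContinuousOn

end IsCrdTower

end Tower

/-- The `k`-fold iterated delta integral of `φ` over `T`, based at `a`. -/
def iteratedDeltaIntegral (T : Set ℝ) (a : ℝ) (φ : ℝ → ℝ) : ℕ → ℝ → ℝ
  | 0 => φ
  | k + 1 => deltaIntegral T (iteratedDeltaIntegral T a φ k) a

section IteratedIntegral

variable {E : Type*} [NormedAddCommGroup E] [NormedSpace ℝ E] {T : Set ℝ} {a b t : ℝ}
  {φ : ℝ → ℝ} {i j k m : ℕ}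

namespace IsTimeScale

theorem eqOn_deltaIntegral_iterate_tsTk (hT : IsTimeScale T a b) (f : ℝ → E) (i : ℕ) :
    EqOn (deltaIntegral (tsTk^[i] T) f a) (deltaIntegral T f a) (tsTk^[i] T) := by
  have ha := (hT.iterate_tsTk i).isLeast.1
  rw [hT.iterate_tsTk_eq i] at ha ⊢
  exact fun t ht => deltaIntegral_inter_Iic ha.2 ht.2

theorem deltaDiffAt_deltaIntegral_iterate_tsTk [CompleteSpace E] (hT : IsTimeScale T a b)
    {f : ℝ → E} (hf : DeltaIntegrand (tsTk^[i] T) f) (ht : t ∈ tsTk^[i + 1] T) :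
    deltaDiffAt (tsTk^[i] T) (deltaIntegral T f a) t (f t) := by
  have hA := hT.iterate_tsTk i
  rw [Function.iterate_succ_apply'] at ht
  exact (hf.deltaDiffAt_deltaIntegral hA (hA.subset_Icc hA.isLeast.1) ht).congr
    (tsSigma_mem hA.isClosed ht.1) (hT.eqOn_deltaIntegral_iterate_tsTk f i)

theorem deltaIntegrand_iteratedDeltaIntegral (hT : IsTimeScale T a b)
    (hφ : RdContinuousOn (tsTk^[m + 1] T) φ) (hjk : j + k = m) :
    DeltaIntegrand (tsTk^[j] T) (iteratedDeltaIntegral T a φ k) := by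
  have hA (i : ℕ) := hT.iterate_tsTk i
  induction k generalizing j with
  | zero =>
    subst hjk
    refine (hA _).deltaIntegrand_of_rdContinuousOn ?_
    rwa [← Function.iterate_succ_apply' tsTk]
  | succ k ih =>
    refine (hA j).deltaIntegrand_of_continuousOn_tsTk ?_
    rw [← Function.iterate_succ_apply' tsTk]
    exact ((ih (by omega : j + 1 + k = m)).continuousOn_deltaIntegral (hA (j + 1))
      ((hA _).subset_Icc (hA _).isLeast.1)).congr
      (hT.eqOn_deltaIntegral_iterate_tsTk _ (j + 1)).symm

theorem isCrdTower_iteratedDeltaIntegral (hT : IsTimeScale T a b)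
    (hφ : RdContinuousOn (tsTk^[m + 1] T) φ) :
    IsCrdTower T (m + 1) (fun i => iteratedDeltaIntegral T a φ (m + 1 - i)) where
  deltaDiffAt i hi t ht := by
    rw [Nat.succ_sub (Nat.le_of_lt_succ hi), Nat.add_sub_add_right]
    exact hT.deltaDiffAt_deltaIntegral_iterate_tsTk
      (hT.deltaIntegrand_iteratedDeltaIntegral hφ (by omega)) ht
  rdContinuousOn := by simpa [iteratedDeltaIntegral] using hφ

theorem deltaDiffAt_iteratedDeltaIntegral_iterate_tsTk (hT : IsTimeScale T a b)
    (hφ : RdContinuousOn (tsTk^[m + 1] T) φ) (hi : i ≤ m) (ht : t ∈ tsTk^[m + 1] T) :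
    deltaDiffAt (tsTk^[m] T) (iteratedDeltaIntegral T a φ (m + 1 - i)) t
      (iteratedDeltaIntegral T a φ (m + 1 - (i + 1)) t) := by
  have hint := (hT.isCrdTower_iteratedDeltaIntegral hφ).deltaIntegrand hT (Nat.succ_le_succ hi)
  rw [Nat.succ_sub hi]
  rw [Nat.add_sub_add_right] at hint ⊢
  exact hT.deltaDiffAt_deltaIntegral_iterate_tsTk hint ht

end IsTimeScale

end IteratedIntegral

section DuBoisReymond

variable {E : Type*} [NormedAddCommGroup E] [NormedSpace ℝ E] {A : Set ℝ} {a b : ℝ}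

theorem DeltaIntegrand.eq_zero_of_forall_deltaIntegral_mul_eq_zero {g : ℝ → ℝ}
    (h : IsTimeScale A a b) (hab : a < b) (hg : DeltaIntegrand A g)
    (hφ : ∀ φ, RdContinuousOn (tsTk A) φ → deltaIntegral A (fun t => φ t * g t) a b = 0) :
    ∀ t ∈ tsTk A, g t = 0 := by
  have hlast {t : ℝ} (ht : t ∈ tsTk A) : t ≤ tsRho A b := h.tsTk.isGreatest.2 ht
  have hinterior : ∀ t ∈ tsTk A, t ≠ tsRho A b → g t = 0 := by
    intro t ht hne
    have hweight := hg.rdContinuousOn_weight_smul h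
    have hint := (h.deltaIntegrand_of_rdContinuousOn hweight).smul hg
    have hsq := hint.eq_zero_of_deltaIntegral_eq_zero h hab (fun s hs => ?_) (hφ _ hweight) t ht
    · simpa [sub_eq_zero, hne.symm] using hsq
    · simp only [smul_eq_mul, mul_assoc]
      exact mul_nonneg (sub_nonneg.2 (hlast hs)) (mul_self_nonneg _)
  intro t ht
  by_cases htM : t = tsRho A b
  -- As `g` vanishes elsewhere, its product with the constant `g t` is nonnegative.
  · have hsq := (hg.continuous_comp (continuous_const_mul (g t))).eq_zero_of_deltaIntegral_eq_zero
      h hab (fun s hs => ?_) (hφ _ (rdContinuousOn_const _ (g t))) t ht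
    · exact mul_self_eq_zero.1 hsq
    · by_cases hsM : s = tsRho A b
      · rw [hsM, ← htM]
        exact mul_self_nonneg _
      · rw [hinterior s hs hsM, mul_zero]
  · exact hinterior t ht htM

theorem DeltaIntegrand.eq_zero_of_forall_deltaIntegral_smul_eq_zero [CompleteSpace E] {g : ℝ → E}
    (h : IsTimeScale A a b) (hab : a < b) (hg : DeltaIntegrand A g)
    (hφ : ∀ φ : ℝ → ℝ, RdContinuousOn (tsTk A) φ → deltaIntegral A (fun t => φ t • g t) a b = 0) :
    ∀ t ∈ tsTk A, g t = 0 := by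
  intro t ht
  refine SeparatingDual.eq_zero_of_forall_dual_eq_zero (R := ℝ) fun ℓ => ?_
  refine (hg.continuous_comp ℓ.continuous).eq_zero_of_forall_deltaIntegral_mul_eq_zero h hab
    (fun φ hrd => ?_) t ht
  have hint := (h.deltaIntegrand_of_rdContinuousOn hrd).smul hg
  simpa [hφ φ hrd] using
    hint.deltaIntegral_clm_comp h ℓ (left_mem_Icc.2 hab.le) (right_mem_Icc.2 hab.le)

end DuBoisReymond

theorem exists_eq_sum_smul_of_forall_eq_zero {ι 𝕜 V W : Type*} [Fintype ι] [Field 𝕜]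
    [AddCommGroup V] [Module 𝕜 V] [AddCommGroup W] [Module 𝕜 W] (ℓ : ι → V →ₗ[𝕜] 𝕜)
    (K : V →ₗ[𝕜] W) (hK : ∀ v, (∀ i, ℓ i v = 0) → K v = 0) :
    ∃ c : ι → W, ∀ v, K v = ∑ i, ℓ i v • c i := by
  classical
  set f := LinearMap.pi ℓ
  obtain ⟨s, hs⟩ := f.rangeRestrict.exists_rightInverse_of_surjective f.range_rangeRestrict
  obtain ⟨g, hg⟩ := (K ∘ₗ s).exists_extend
  refine ⟨fun i => g fun j => if i = j then 1 else 0, fun v => ?_⟩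
  have hsection : f (v - s (f.rangeRestrict v)) = 0 := by
    rw [map_sub, sub_eq_zero]
    exact (congrArg Subtype.val (LinearMap.congr_fun hs (f.rangeRestrict v))).symm
  have hKv := hK _ (congrFun hsection)
  rw [map_sub, sub_eq_zero] at hKv
  calc K v = g (f v) := hKv.trans (LinearMap.congr_fun hg (f.rangeRestrict v)).symm
    _ = ∑ i, ℓ i v • g fun j => if i = j then 1 else 0 := g.pi_apply_eq_sum_univ (f v)

section Costate

variable {E : Type*} [NormedAddCommGroup E] [NormedSpace ℝ E] {A : Set ℝ} {a β t : ℝ}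
  {q : ℕ → ℝ → E} {c : ℕ → E} {r : ℕ}

/-- The costate variables, shifted by one: `costate A β q c (i + 1)` is the `p^i` with
`(p^i)^Δ = -q_i - p^{i-1} ∘ σ` and terminal value `p^i(β) = -c_i`, where `p^{-1} = 0`. -/
def costate (A : Set ℝ) (β : ℝ) (q : ℕ → ℝ → E) (c : ℕ → E) : ℕ → ℝ → E
  | 0 => 0
  | i + 1 => fun t =>
      -(c i + deltaIntegral A (fun s => q i s + costate A β q c i (tsSigma A s)) β t)

theorem costate_succ_self (A : Set ℝ) (β : ℝ) (q : ℕ → ℝ → E) (c : ℕ → E) (i : ℕ) :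
    costate A β q c (i + 1) β = -c i := by
  simp only [costate, deltaIntegral_self, add_zero]

theorem continuousOn_costate (h : IsTimeScale A a β) (hq : ∀ i < r, DeltaIntegrand A (q i))
    {i : ℕ} (hi : i ≤ r) : ContinuousOn (costate A β q c i) A := by
  induction i with
  | zero => exact continuousOn_const
  | succ i ih =>
    have hint := (hq i hi).add (h.deltaIntegrand_comp_tsSigma (ih (Nat.le_of_lt hi)))
    exact (continuousOn_const.add (hint.continuousOn_deltaIntegral h
      (h.subset_Icc h.isGreatest.1))).neg

theorem deltaDiffAt_costate_succ [CompleteSpace E] (h : IsTimeScale A a β)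
    (hq : ∀ i < r, DeltaIntegrand A (q i)) {i : ℕ} (hi : i < r) (ht : t ∈ tsTk A) :
    deltaDiffAt A (costate A β q c (i + 1)) t (-(q i t + costate A β q c i (tsSigma A t))) := by
  have hint := (hq i hi).add (h.deltaIntegrand_comp_tsSigma
    (continuousOn_costate (c := c) h hq hi.le))
  have hprim := hint.deltaDiffAt_deltaIntegral h (h.subset_Icc h.isGreatest.1) ht
  have hconst : deltaDiffAt A (fun _ => -c i) t 0 := by simp [deltaDiffAt_iff_isLittleO]
  simpa [costate, neg_add_rev, add_comm] using
    hconst.add (hprim.clm_comp (-ContinuousLinearMap.id ℝ E))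

theorem deltaDiffAt_sum_smul_costate [CompleteSpace E] (h : IsTimeScale A a β)
    (hq : ∀ i < r, DeltaIntegrand A (q i)) {N : ℕ → ℝ → ℝ}
    (hN : ∀ i < r, deltaDiffAt A (N i) t (N (i + 1) t)) (ht : t ∈ tsTk A) :
    deltaDiffAt A (fun s => ∑ i ∈ Finset.range r, N i s • costate A β q c (i + 1) s) t
      (N r t • (q r t + costate A β q c r (tsSigma A t))
        + -∑ i ∈ Finset.range (r + 1), N i t • q i t) := by
  have hterm := deltaDiffAt.sum (Finset.range r) fun i hi =>
    (hN i (Finset.mem_range.1 hi)).smul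
      (deltaDiffAt_costate_succ (c := c) h hq (Finset.mem_range.1 hi) ht) ht.1
  have htele := Finset.sum_range_sub (fun i => N i t • costate A β q c i (tsSigma A t)) r
  have hzero : N 0 t • costate A β q c 0 (tsSigma A t) = 0 := smul_zero _
  rw [Finset.sum_sub_distrib, hzero, sub_zero] at htele
  convert hterm using 1
  simp only [smul_add, smul_neg, neg_add_rev, Finset.sum_add_distrib, Finset.sum_neg_distrib,
    Finset.sum_range_succ _ r, ← htele]
  abel

theorem deltaIntegral_smul_add_costate [CompleteSpace E] (h : IsTimeScale A a β)
    (hq : ∀ i ≤ r, DeltaIntegrand A (q i)) {N : ℕ → ℝ → ℝ}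
    (hN : ∀ i ≤ r, DeltaIntegrand A (N i))
    (hNΔ : ∀ i < r, ∀ t ∈ tsTk A, deltaDiffAt A (N i) t (N (i + 1) t))
    (hNa : ∀ i < r, N i a = 0) :
    deltaIntegral A (fun t => N r t • (q r t + costate A β q c r (tsSigma A t))) a β =
      deltaIntegral A (fun t => ∑ i ∈ Finset.range (r + 1), N i t • q i t) a β -
        ∑ i ∈ Finset.range r, N i β • c i := by
  have hq' : ∀ i < r, DeltaIntegrand A (q i) := fun i hi => hq i hi.le
  have ha := h.subset_Icc h.isLeast.1
  have hβ := h.subset_Icc h.isGreatest.1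
  have hlast := (hN r le_rfl).smul ((hq r le_rfl).add
    (h.deltaIntegrand_comp_tsSigma (continuousOn_costate (c := c) h hq' le_rfl)))
  have hsum := DeltaIntegrand.sum (Finset.range (r + 1)) fun i hi =>
    (hN i (Finset.mem_range_succ_iff.1 hi)).smul (hq i (Finset.mem_range_succ_iff.1 hi))
  have hftc := (hlast.add hsum.neg).deltaIntegral_eq_sub h fun t ht =>
    deltaDiffAt_sum_smul_costate (c := c) h hq' (fun i hi => hNΔ i hi t ht) ht
  have hinitial : ∑ i ∈ Finset.range r, N i a • costate A β q c (i + 1) a = 0 :=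
    Finset.sum_eq_zero fun i hi => by rw [hNa i (Finset.mem_range.1 hi), zero_smul]
  have hneg := hsum.deltaIntegral_clm_comp h (-ContinuousLinearMap.id ℝ E) ha hβ
  simp only [neg_apply, ContinuousLinearMap.id_apply] at hneg
  rw [hlast.deltaIntegral_add h hsum.neg ha hβ, hneg, hinitial, sub_zero] at hftc
  rw [← sub_eq_add_neg, sub_eq_iff_eq_add] at hftc
  simp only [hftc, costate_succ_self, smul_neg, Finset.sum_neg_distrib, neg_add_eq_sub]

end Costate

/-- Scalar `C^r_rd(T)` variations, recorded with their delta derivatives, whose derivatives of order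
less than `r` vanish at `a`. -/
def variationSpace (T : Set ℝ) (a : ℝ) (r : ℕ) : Submodule ℝ (ℕ → ℝ → ℝ) where
  carrier := {N | IsCrdTower T r N ∧ ∀ i < r, N i a = 0}
  add_mem' hM hN := ⟨hM.1.add hN.1, fun i hi => by simp [hM.2 i hi, hN.2 i hi]⟩
  zero_mem' := ⟨⟨fun _ _ _ _ => by simp [deltaDiffAt_iff_isLittleO], rdContinuousOn_const _ 0⟩,
    fun _ _ => rfl⟩
  smul_mem' k _ hN := ⟨hN.1.clm_comp (k • ContinuousLinearMap.id ℝ ℝ),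
    fun i hi => by simp [hN.2 i hi]⟩

section Multipliers

variable {E : Type*} [NormedAddCommGroup E] [NormedSpace ℝ E] {T : Set ℝ}
  {a b : ℝ} {m : ℕ} {q : ℕ → ℝ → E}

theorem deltaIntegrand_sum_smul_variation (hT : IsTimeScale T a b)
    (hq : ∀ i ≤ m + 1, DeltaIntegrand (tsTk^[m] T) (q i)) (N : variationSpace T a (m + 1)) :
    DeltaIntegrand (tsTk^[m] T) (fun t => ∑ i ∈ Finset.range (m + 2), N.1 i t • q i t) :=
  DeltaIntegrand.sum _ fun i hi => (N.2.1.deltaIntegrand hT (Finset.mem_range_succ_iff.1 hi)).smul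
    (hq i (Finset.mem_range_succ_iff.1 hi))

variable [CompleteSpace E]

/-- The pairing of a variation `N` with coefficients `q`, that is, the delta integral of
`∑ i, N i • q i`; for `q i = L_{u_i}` along a trajectory it is the first variation of the action. -/
def variationPairing (hT : IsTimeScale T a b)
    (hq : ∀ i ≤ m + 1, DeltaIntegrand (tsTk^[m] T) (q i)) : variationSpace T a (m + 1) →ₗ[ℝ] E where
  toFun N := deltaIntegral (tsTk^[m] T) (fun t => ∑ i ∈ Finset.range (m + 2), N.1 i t • q i t) a
    ((tsRho T)^[m] b)
  map_add' M N := by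
    have hA := hT.iterate_tsTk m
    rw [← (deltaIntegrand_sum_smul_variation hT hq M).deltaIntegral_add hA
      (deltaIntegrand_sum_smul_variation hT hq N) (hA.subset_Icc hA.isLeast.1)
      (hA.subset_Icc hA.isGreatest.1)]
    simp only [Submodule.coe_add, Pi.add_apply, add_smul, Finset.sum_add_distrib]
  map_smul' k N := by
    have hA := hT.iterate_tsTk m
    simp only [Submodule.coe_smul, Pi.smul_apply, smul_eq_mul, mul_smul, ← Finset.smul_sum,
      RingHom.id_apply]
    exact (deltaIntegrand_sum_smul_variation hT hq N).deltaIntegral_clm_comp hA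
      (k • ContinuousLinearMap.id ℝ E) (hA.subset_Icc hA.isLeast.1) (hA.subset_Icc hA.isGreatest.1)

theorem exists_terminal_multipliers (hT : IsTimeScale T a b)
    (hq : ∀ i ≤ m + 1, DeltaIntegrand (tsTk^[m] T) (q i))
    (hcrit : ∀ N : variationSpace T a (m + 1), (∀ i < m + 1, N.1 i ((tsRho T)^[m] b) = 0) →
      variationPairing hT hq N = 0) :
    ∃ c : ℕ → E, ∀ N : variationSpace T a (m + 1),
      variationPairing hT hq N =
        ∑ i ∈ Finset.range (m + 1), N.1 i ((tsRho T)^[m] b) • c i := by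
  let endpoint (i : Fin (m + 1)) : variationSpace T a (m + 1) →ₗ[ℝ] ℝ :=
    LinearMap.proj ((tsRho T)^[m] b) ∘ₗ LinearMap.proj i.1 ∘ₗ Submodule.subtype _
  obtain ⟨c, hc⟩ := exists_eq_sum_smul_of_forall_eq_zero endpoint (variationPairing hT hq)
    fun N hN => hcrit N fun i hi => hN ⟨i, hi⟩
  refine ⟨fun i => if hi : i < m + 1 then c ⟨i, hi⟩ else 0, fun N => (hc N).trans ?_⟩
  simp only [Finset.sum_range, Fin.is_lt, dite_true]
  rfl

theorem exists_costate_eq_neg (hT : IsTimeScale T a b) (hlt : a < (tsRho T)^[m] b)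
    (hq : ∀ i ≤ m + 1, DeltaIntegrand (tsTk^[m] T) (q i))
    (hcrit : ∀ N : variationSpace T a (m + 1), (∀ i < m + 1, N.1 i ((tsRho T)^[m] b) = 0) →
      variationPairing hT hq N = 0) :
    ∃ c : ℕ → E, ∀ t ∈ tsTk^[m + 1] T,
      costate (tsTk^[m] T) ((tsRho T)^[m] b) q c (m + 1) (tsSigma (tsTk^[m] T) t) =
        -q (m + 1) t := by
  obtain ⟨c, hc⟩ := exists_terminal_multipliers hT hq hcrit
  refine ⟨c, fun t ht => ?_⟩
  have hA := hT.iterate_tsTk m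
  have hcostate := hA.deltaIntegrand_comp_tsSigma
    (continuousOn_costate (c := c) hA (fun i hi => hq i (Nat.le_of_lt hi)) le_rfl)
  rw [Function.iterate_succ_apply'] at ht
  refine (neg_eq_of_add_eq_zero_right (((hq _ le_rfl).add
    hcostate).eq_zero_of_forall_deltaIntegral_smul_eq_zero hA hlt (fun φ hφ => ?_) t ht)).symm
  rw [← Function.iterate_succ_apply' tsTk] at hφ
  set N : ℕ → ℝ → ℝ := fun i => iteratedDeltaIntegral T a φ (m + 1 - i) with hN
  have htower : IsCrdTower T (m + 1) N := hT.isCrdTower_iteratedDeltaIntegral hφ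
  have hNa : ∀ i < m + 1, N i a = 0 := fun i hi => by
    simp only [hN, Nat.succ_sub (Nat.le_of_lt_succ hi)]
    exact deltaIntegral_self _ _ _
  have hparts := deltaIntegral_smul_add_costate (c := c) hA hq
    (fun i hi => htower.deltaIntegrand hT hi) (fun i hi s hs =>
      hT.deltaDiffAt_iteratedDeltaIntegral_iterate_tsTk hφ (Nat.le_of_lt_succ hi)
        (Function.iterate_succ_apply' tsTk m T ▸ hs)) hNa
  rw [← hc ⟨N, htower, hNa⟩] at hparts
  have hzero := hparts.trans (sub_self _)
  simpa [hN, iteratedDeltaIntegral] using hzero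

end Multipliers

section FirstVariation

variable {E F : Type*} [NormedAddCommGroup E] [NormedSpace ℝ E] [NormedAddCommGroup F]
  [NormedSpace ℝ F] {A : Set ℝ} {a b : ℝ} {Φ : ℝ → E → F} {Φ' : ℝ → E → E →L[ℝ] F}
  {X H : ℝ → E}

theorem DeltaIntegrand.exists_norm_apply_add_smul_le [CompleteSpace E] (h : IsTimeScale A a b)
    (hX : DeltaIntegrand A X) (hH : DeltaIntegrand A H)
    (hΦ' : ContinuousOn (fun p : ℝ × E => Φ' p.1 p.2) (A ×ˢ univ)) :
    ∃ C, ∀ t ∈ tsTk A, ∀ ε ∈ Icc (-1 : ℝ) 1, ‖Φ' t (X t + ε • H t) (H t)‖ ≤ C := by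
  set K : Set (E × E) := closure ((fun t => (X t, H t)) '' tsTk A)
  have hKcompact : IsCompact K :=
    ((hX.prodMk hH).totallyBounded_image h).closure.isCompact_of_isClosed isClosed_closure
  have hcont : ContinuousOn (fun p : ℝ × ℝ × E × E => Φ' p.1 (p.2.2.1 + p.2.1 • p.2.2.2) p.2.2.2)
      (A ×ˢ Icc (-1 : ℝ) 1 ×ˢ K) :=
    (hΦ'.comp (f := fun p : ℝ × ℝ × E × E => (p.1, p.2.2.1 + p.2.1 • p.2.2.2)) (by fun_prop)
      fun p hp => ⟨hp.1, mem_univ _⟩).clm_apply (by fun_prop)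
  obtain ⟨C, hC⟩ :=
    (h.isCompact.prod (isCompact_Icc.prod hKcompact)).exists_bound_of_continuousOn hcont
  exact ⟨C, fun t ht ε hε =>
    hC (t, ε, X t, H t) ⟨ht.1, hε, subset_closure (mem_image_of_mem _ ht)⟩⟩

theorem DeltaIntegrand.hasDerivAt_deltaIntegral_add_smul [CompleteSpace E] (h : IsTimeScale A a b)
    (hX : DeltaIntegrand A X) (hH : DeltaIntegrand A H)
    (hΦ : ContinuousOn (fun p : ℝ × E => Φ p.1 p.2) (A ×ˢ univ))
    (hΦ' : ContinuousOn (fun p : ℝ × E => Φ' p.1 p.2) (A ×ˢ univ))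
    (hderiv : ∀ t ∈ A, ∀ Z, HasFDerivAt (Φ t) (Φ' t Z) Z) :
    HasDerivAt (fun ε : ℝ => deltaIntegral A (fun t => Φ t (X t + ε • H t)) a b)
      (deltaIntegral A (fun t => Φ' t (X t) (H t)) a b) 0 := by
  have hab : a ≤ b := h.isLeast.2 h.isGreatest.1
  have hint {G : ℝ → F} (hG : DeltaIntegrand A G) :
      IntervalIntegrable (fun x => G (tsFloor A x)) volume a b :=
    hG.intervalIntegrable h (left_mem_Icc.2 hab) (right_mem_Icc.2 hab)
  have hΦint (ε : ℝ) : DeltaIntegrand A (fun t => Φ t (X t + ε • H t)) :=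
    (hX.add (hH.continuous_comp (continuous_const_smul ε))).comp hΦ
  have hΦ'int : DeltaIntegrand A (fun t => Φ' t (X t) (H t)) :=
    (hX.prodMk hH).comp (Φ := fun p : ℝ × E × E => Φ' p.1 p.2.1 p.2.2)
      ((hΦ'.comp (f := fun p : ℝ × E × E => (p.1, p.2.1)) (by fun_prop)
        fun p hp => ⟨hp.1, mem_univ _⟩).clm_apply (by fun_prop))
  obtain ⟨C, hC⟩ := hX.exists_norm_apply_add_smul_le h hH hΦ'
  have hfloor : ∀ᵐ x, x ∈ uIoc a b → tsFloor A x ∈ tsTk A := by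
    filter_upwards [Measure.ae_ne volume b] with x hxb hx
    rw [uIoc_of_le hab] at hx
    exact h.tsFloor_mem_tsTk ⟨hx.1.le, hx.2.lt_of_ne hxb⟩
  have hline (t : ℝ) (ht : t ∈ A) (ε : ℝ) :
      HasDerivAt (fun ε : ℝ => Φ t (X t + ε • H t)) (Φ' t (X t + ε • H t) (H t)) ε := by
    have hpath : HasDerivAt (fun ε : ℝ => X t + ε • H t) (H t) ε := by
      simpa using ((hasDerivAt_id ε).smul_const (H t)).const_add (X t)
    exact (hderiv t ht _).comp_hasDerivAt ε hpath
  have hdiff := (intervalIntegral.hasDerivAt_integral_of_dominated_loc_of_deriv_le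
    (F' := fun ε x => Φ' (tsFloor A x) (X (tsFloor A x) + ε • H (tsFloor A x)) (H (tsFloor A x)))
    (bound := fun _ => C) (Icc_mem_nhds (neg_lt_zero.2 one_pos) one_pos)
    (Eventually.of_forall fun ε => (intervalIntegrable_iff.1 (hint (hΦint ε))).aestronglyMeasurable)
    (hint (hΦint 0))
    (by simpa using (intervalIntegrable_iff.1 (hint hΦ'int)).aestronglyMeasurable)
    (hfloor.mono fun x hx hxab => hC _ (hx hxab)) intervalIntegrable_const
    (hfloor.mono fun x hx hxab ε _ => hline _ (hx hxab).1 ε)).2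
  simpa only [deltaIntegral, zero_smul, add_zero] using hdiff

end FirstVariation

theorem hasFDerivAt_of_hasGradientAt_update {ι E : Type*} [Fintype ι] [DecidableEq ι]
    [NormedAddCommGroup E] [InnerProductSpace ℝ E] [CompleteSpace E] {f : (ι → E) → ℝ}
    {G : ι → E} {X : ι → E} (hf : DifferentiableAt ℝ f X)
    (hG : ∀ i, HasGradientAt (fun z => f (Function.update X i z)) (G i) (X i)) :
    HasFDerivAt f (∑ i, (innerSL ℝ (G i)).comp (ContinuousLinearMap.proj i)) X := by
  have hpartial (i : ι) (v : E) : fderiv ℝ f X (Pi.single i v) = inner ℝ (G i) v := by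
    have hf' : HasFDerivAt f (fderiv ℝ f X) (Function.update X i (X i)) := by
      rw [Function.update_eq_self]
      exact hf.hasFDerivAt
    have hcomp := (hG i).hasFDerivAt.unique (hf'.comp (X i) (hasFDerivAt_update X (X i)))
    rw [← InnerProductSpace.toDual_apply_apply, hcomp, ContinuousLinearMap.comp_apply]
    congr 1
    ext j
    rcases eq_or_ne j i with rfl | hj <;> simp [*]
  refine hf.hasFDerivAt.congr_fderiv (ContinuousLinearMap.ext fun H => ?_)
  rw [← ContinuousLinearMap.sum_comp_single ℝ (fun _ => E) (fderiv ℝ f X) H]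
  simp [hpartial]

open scoped Pointwise in
theorem tsSupNorm_const_smul {E : Type*} [NormedAddCommGroup E] [NormedSpace ℝ E] (S : Set ℝ)
    (k : ℝ) (f : ℝ → E) : tsSupNorm S (fun t => k • f t) = |k| * tsSupNorm S f := by
  have himage : (fun t => ‖k • f t‖) '' S = |k| • (fun t => ‖f t‖) '' S := by
    simp only [← image_smul, image_image, norm_smul, Real.norm_eq_abs, smul_eq_mul]
  rw [tsSupNorm, himage, Real.sSup_smul_of_nonneg (abs_nonneg k), smul_eq_mul, tsSupNorm]

/-- A Lagrangian of order `r` on `T`, with partial gradients `Lu i = L_{u_i}`. -/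
structure IsLagrangian {E : Type*} [NormedAddCommGroup E] [InnerProductSpace ℝ E] [CompleteSpace E]
    (T : Set ℝ) (r : ℕ) (L : ℝ → (Fin (r + 1) → E) → ℝ) (Lu : ℕ → ℝ → (Fin (r + 1) → E) → E) :
    Prop where
  continuousOn : ContinuousOn (fun p : ℝ × (Fin (r + 1) → E) => L p.1 p.2) (T ×ˢ univ)
  differentiable : ∀ t ∈ T, Differentiable ℝ (L t)
  hasGradientAt : ∀ i : Fin (r + 1), ∀ t ∈ T, ∀ X : Fin (r + 1) → E,
    HasGradientAt (fun z => L t (Function.update X i z)) (Lu i t X) (X i)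
  continuousOn_gradient : ∀ i : Fin (r + 1),
    ContinuousOn (fun p : ℝ × (Fin (r + 1) → E) => Lu i p.1 p.2) (T ×ˢ univ)

/-- Weak local minimality of `Y` for the action of `L`, with all boundary data of order less than
`r` fixed. The action of `Y` is `F (ρ^{r-1}(b)) - F a` for any delta antiderivative `F` of `L` along
`Y`. -/
def IsWeakLocalMin {E : Type*} [NormedAddCommGroup E] [NormedSpace ℝ E]
    (T : Set ℝ) (a b : ℝ) (r : ℕ) (L : ℝ → (Fin (r + 1) → E) → ℝ) (Y : ℕ → ℝ → E) : Prop :=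
  ∃ δ > 0, ∀ Z : ℕ → ℝ → E, IsCrdTower T r Z →
    (∀ i < r, Z i a = Y i a ∧ Z i ((tsRho T)^[r - 1] b) = Y i ((tsRho T)^[r - 1] b)) →
    (∑ i ∈ Finset.range (r + 1), tsSupNorm (tsTk^[r] T) (fun t => Z i t - Y i t)) < δ →
    ∀ F G : ℝ → ℝ,
      IsDeltaAntideriv (tsTk^[r - 1] T) (fun t => L t (fun i => Y i t)) F →
      IsDeltaAntideriv (tsTk^[r - 1] T) (fun t => L t (fun i => Z i t)) G →
      F ((tsRho T)^[r - 1] b) - F a ≤ G ((tsRho T)^[r - 1] b) - G a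

theorem IsCrdTower.deltaIntegrand_jet {E : Type*} [NormedAddCommGroup E] [NormedSpace ℝ E]
    {T : Set ℝ} {a b : ℝ} {m : ℕ} {Y : ℕ → ℝ → E} (hT : IsTimeScale T a b)
    (hY : IsCrdTower T (m + 1) Y) :
    DeltaIntegrand (tsTk^[m] T) (fun t (i : Fin (m + 2)) => Y i t) :=
  DeltaIntegrand.pi fun i => hY.deltaIntegrand hT (Nat.le_of_lt_succ i.2)

section EulerLagrange

variable {E : Type*} [NormedAddCommGroup E] [InnerProductSpace ℝ E] [CompleteSpace E] {T : Set ℝ}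
  {a b : ℝ} {m : ℕ} {L : ℝ → (Fin (m + 2) → E) → ℝ} {Lu : ℕ → ℝ → (Fin (m + 2) → E) → E}
  {Y : ℕ → ℝ → E}

namespace IsLagrangian

theorem deltaIntegrand (hT : IsTimeScale T a b) (hL : IsLagrangian T (m + 1) L Lu)
    (hY : IsCrdTower T (m + 1) Y) :
    DeltaIntegrand (tsTk^[m] T) (fun t => L t (fun i => Y i t)) :=
  (hY.deltaIntegrand_jet hT).comp (hL.continuousOn.mono
    (prod_mono_left (iterate_tsTk_subset_iterate_tsTk (Nat.zero_le m))))

theorem deltaIntegrand_gradient (hT : IsTimeScale T a b) (hL : IsLagrangian T (m + 1) L Lu)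
    (hY : IsCrdTower T (m + 1) Y) (i : ℕ) (hi : i ≤ m + 1) :
    DeltaIntegrand (tsTk^[m] T) (fun t => Lu i t (fun j => Y j t)) :=
  (hY.deltaIntegrand_jet hT).comp ((hL.continuousOn_gradient ⟨i, Nat.lt_succ_of_le hi⟩).mono
    (prod_mono_left (iterate_tsTk_subset_iterate_tsTk (Nat.zero_le m))))

theorem hasDerivAt_action (hT : IsTimeScale T a b) (hL : IsLagrangian T (m + 1) L Lu)
    (hY : IsCrdTower T (m + 1) Y) (N : variationSpace T a (m + 1)) (e : E) :
    HasDerivAt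
      (fun ε : ℝ => deltaIntegral (tsTk^[m] T)
        (fun t => L t (fun i => Y i t + ε • N.1 i t • e)) a ((tsRho T)^[m] b))
      (inner ℝ e (variationPairing hT (hL.deltaIntegrand_gradient hT hY) N)) 0 := by
  have hA := hT.iterate_tsTk m
  have hAT : tsTk^[m] T ⊆ T := iterate_tsTk_subset_iterate_tsTk (Nat.zero_le m)
  have hH : DeltaIntegrand (tsTk^[m] T) (fun t (i : Fin (m + 2)) => N.1 i t • e) :=
    (N.2.1.clm_comp (ContinuousLinearMap.smulRight (1 : ℝ →L[ℝ] ℝ) e)).deltaIntegrand_jet hT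
  have hderiv := (hY.deltaIntegrand_jet hT).hasDerivAt_deltaIntegral_add_smul hA hH
    (hL.continuousOn.mono (prod_mono_left hAT))
    (Φ' := fun t X => ∑ i : Fin (m + 2), (innerSL ℝ (Lu i t X)).comp (ContinuousLinearMap.proj i))
    ((continuousOn_finsetSum _ fun i _ => ((innerSL ℝ).continuous.comp_continuousOn
      (hL.continuousOn_gradient i)).clm_comp continuousOn_const).mono (prod_mono_left hAT))
    fun t ht X => hasFDerivAt_of_hasGradientAt_update (hL.differentiable t (hAT ht) X)
      fun i => hL.hasGradientAt i t (hAT ht) X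
  have hpairing := (deltaIntegrand_sum_smul_variation hT (hL.deltaIntegrand_gradient hT hY)
    N).deltaIntegral_clm_comp hA (innerSL ℝ e) (hA.subset_Icc hA.isLeast.1)
    (hA.subset_Icc hA.isGreatest.1)
  rw [innerSL_apply_apply] at hpairing
  refine hderiv.congr_deriv (Eq.trans ?_ hpairing)
  simp [Finset.sum_range, real_inner_comm]

theorem isLocalMin_action (hT : IsTimeScale T a b) (hL : IsLagrangian T (m + 1) L Lu)
    (hY : IsCrdTower T (m + 1) Y) (hmin : IsWeakLocalMin T a b (m + 1) L Y)
    (N : variationSpace T a (m + 1)) (hN : ∀ i < m + 1, N.1 i ((tsRho T)^[m] b) = 0) (e : E) :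
    IsLocalMin
      (fun ε : ℝ => deltaIntegral (tsTk^[m] T)
        (fun t => L t (fun i => Y i t + ε • N.1 i t • e)) a ((tsRho T)^[m] b)) 0 := by
  have hA := hT.iterate_tsTk m
  obtain ⟨δ, hδ, hmin⟩ := hmin
  set D := ∑ i ∈ Finset.range (m + 2), tsSupNorm (tsTk^[m + 1] T) (fun t => N.1 i t • e)
  have hsmall : ∀ᶠ ε : ℝ in 𝓝 0, |ε| * D < δ := by
    have hcont : Continuous fun ε : ℝ => |ε| * D := by fun_prop
    exact hcont.continuousAt.eventually_lt continuousAt_const (by simpa using hδ)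
  have hprimitive {Z : ℕ → ℝ → E} (hZ : IsCrdTower T (m + 1) Z) :
      IsDeltaAntideriv (tsTk^[m] T) (fun t => L t (fun i => Z i t))
        (deltaIntegral (tsTk^[m] T) (fun t => L t (fun i => Z i t)) a) := fun t ht =>
    (hL.deltaIntegrand hT hZ).deltaDiffAt_deltaIntegral hA (hA.subset_Icc hA.isLeast.1) ht
  filter_upwards [hsmall] with ε hε
  have hZ : IsCrdTower T (m + 1) (fun i t => Y i t + ε • N.1 i t • e) :=
    hY.add (N.2.1.clm_comp (ε • ContinuousLinearMap.smulRight (1 : ℝ →L[ℝ] ℝ) e))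
  have hle := hmin _ hZ (fun i hi => by simp [N.2.2 i hi, hN i hi])
    (by simpa only [add_sub_cancel_left, tsSupNorm_const_smul, ← Finset.mul_sum] using hε) _ _
    (hprimitive hY) (hprimitive hZ)
  simpa [deltaIntegral_self] using hle

theorem variationPairing_eq_zero (hT : IsTimeScale T a b) (hL : IsLagrangian T (m + 1) L Lu)
    (hY : IsCrdTower T (m + 1) Y) (hmin : IsWeakLocalMin T a b (m + 1) L Y)
    (N : variationSpace T a (m + 1)) (hN : ∀ i < m + 1, N.1 i ((tsRho T)^[m] b) = 0) :
    variationPairing hT (hL.deltaIntegrand_gradient hT hY) N = 0 :=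
  inner_self_eq_zero.1 <| (hL.isLocalMin_action hT hY hmin N hN _).hasDerivAt_eq_zero
    (hL.hasDerivAt_action hT hY N _)

end IsLagrangian

end EulerLagrange

theorem higher_order_euler_lagrange_time_scales_general
    {E : Type*} [NormedAddCommGroup E] [InnerProductSpace ℝ E] [CompleteSpace E]
    {T : Set ℝ} {a b : ℝ} {r : ℕ} (hr : 1 ≤ r) (hT : IsTimeScale T a b)
    (hlt : a < (tsRho T)^[r - 1] b) {L : ℝ → (Fin (r + 1) → E) → ℝ}
    {Lu : ℕ → ℝ → (Fin (r + 1) → E) → E} (hL : IsLagrangian T r L Lu) {Y : ℕ → ℝ → E}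
    (hY : IsCrdTower T r Y) (hmin : IsWeakLocalMin T a b r L Y) :
    ∃ p pd : ℕ → ℝ → E,
      (∀ i < r, ∀ t ∈ tsTk^[r] T, deltaDiffAt (tsTk^[r - 1] T) (p i) t (pd i t)) ∧
      (∀ t ∈ tsTk^[r] T, pd 0 t = -Lu 0 t (fun j => Y j t)) ∧
      (∀ i, 1 ≤ i → i < r → ∀ t ∈ tsTk^[r] T,
        pd i t = -Lu i t (fun j => Y j t) - p (i - 1) (tsSigma T t)) ∧
      (∀ t ∈ tsTk^[r] T, p (r - 1) (tsSigma T t) = -Lu r t (fun j => Y j t)) := by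
  obtain ⟨m, rfl⟩ := Nat.exists_eq_add_of_le' hr
  rw [Nat.add_sub_cancel] at *
  have hq := hL.deltaIntegrand_gradient hT hY
  obtain ⟨c, hc⟩ := exists_costate_eq_neg hT hlt hq (hL.variationPairing_eq_zero hT hY hmin)
  have hA := hT.iterate_tsTk m
  set A := tsTk^[m] T with hAdef
  set β := (tsRho T)^[m] b
  have hA_eq : A = T ∩ Iic β := hT.iterate_tsTk_eq m
  have hσ {t : ℝ} (ht : t ∈ tsTk A) : min (tsSigma T t) β = tsSigma A t := by
    have htA := hA_eq ▸ ht.1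
    rw [hA_eq, tsSigma_inter_Iic (hA_eq ▸ hA.isGreatest.1).1 htA.2]
  simp only [Function.iterate_succ_apply' tsTk, ← hAdef] at hc ⊢
  -- At the last point of `A^k`, `σ` may lead out of `A`; extending the costates constantly past `β`
  -- makes their composites with the jump operators of `T` and of `A` agree.
  refine ⟨fun i t => costate A β (fun i t => Lu i t (fun j => Y j t)) c (i + 1) (min t β),
    fun i t => -(Lu i t (fun j => Y j t) + costate A β (fun i t => Lu i t (fun j => Y j t))
      c i (tsSigma A t)),
    fun i hi t ht => ?_, fun t _ => ?_, fun i hi₁ hi t ht => ?_, fun t ht => ?_⟩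
  · exact (deltaDiffAt_costate_succ hA (fun i hi => hq i hi.le) hi ht).congr
      (tsSigma_mem hA.isClosed ht.1) fun s hs => by simp [min_eq_left (hA.isGreatest.2 hs)]
  · simp [costate]
  · obtain ⟨i, rfl⟩ := Nat.exists_eq_add_of_le' hi₁
    simp only [Nat.add_sub_cancel, hσ ht, neg_add']
  · simpa [hσ ht] using hc t ht

theorem higher_order_euler_lagrange_time_scales
    {n r : ℕ} (hn : 1 ≤ n) (hr : 1 ≤ r)
    (T₀ : Set ℝ) (hT₀closed : IsClosed T₀)
    (a b : ℝ) (ha : a ∈ T₀) (hb : b ∈ T₀) (hab : a < b)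
    (T : Set ℝ) (hT : T = Icc a b ∩ T₀)
    (hcard : ∃ s : Finset ℝ, ↑s ⊆ T ∧ s.card = 2 * r + 1)
    (T' : Set ℝ) (hT' : T' = Icc a ((tsRho T)^[r - 1] b) ∩ T₀)
    (L : ℝ → (Fin (r + 1) → En n) → ℝ)
    (Lu : ℕ → ℝ → (Fin (r + 1) → En n) → En n)
    (hLc : ContinuousOn (fun p : ℝ × (Fin (r + 1) → En n) => L p.1 p.2)
      (T ×ˢ (univ : Set (Fin (r + 1) → En n))))
    (hLsmooth : ∀ t ∈ T, ContDiff ℝ (r + 1) (L t))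
    (hLu : ∀ i : Fin (r + 1), ∀ t ∈ T, ∀ X : Fin (r + 1) → En n,
      HasGradientAt (fun z => L t (Function.update X i z)) (Lu i.1 t X) (X i))
    (hLuc : ∀ i : Fin (r + 1),
      ContinuousOn (fun p : ℝ × (Fin (r + 1) → En n) => Lu i.1 p.1 p.2)
        (T ×ˢ (univ : Set (Fin (r + 1) → En n))))
    (Y : ℕ → ℝ → En n)
    (hY : ∀ i < r, ∀ t ∈ tsTk^[i + 1] T, deltaDiffAt (tsTk^[i] T) (Y i) t (Y (i + 1) t))
    (hYrd : RdContinuousOn (tsTk^[r] T) (Y r))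
    (hmin : ∃ δ > 0, ∀ Z : ℕ → ℝ → En n,
      (∀ i < r, ∀ t ∈ tsTk^[i + 1] T, deltaDiffAt (tsTk^[i] T) (Z i) t (Z (i + 1) t)) →
      RdContinuousOn (tsTk^[r] T) (Z r) →
      (∀ i < r, Z i a = Y i a ∧
        Z i ((tsRho T)^[r - 1] b) = Y i ((tsRho T)^[r - 1] b)) →
      (∑ i ∈ Finset.range (r + 1), tsSupNorm (tsTk^[r] T) (fun t => Z i t - Y i t)) < δ →
      ∀ F G : ℝ → ℝ,
        IsDeltaAntideriv T' (fun t => L t (fun i => Y i.1 t)) F →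
        IsDeltaAntideriv T' (fun t => L t (fun i => Z i.1 t)) G →
        F ((tsRho T)^[r - 1] b) - F a ≤ G ((tsRho T)^[r - 1] b) - G a) :
    ∃ p pd : ℕ → ℝ → En n,
      (∀ i < r, ∀ t ∈ tsTk^[r] T, deltaDiffAt T' (p i) t (pd i t)) ∧
      (∀ t ∈ tsTk^[r] T, pd 0 t = -Lu 0 t (fun i => Y i.1 t)) ∧
      (∀ i, 1 ≤ i → i < r → ∀ t ∈ tsTk^[r] T,
        pd i t = -Lu i t (fun j => Y j.1 t) - p (i - 1) (tsSigma T t)) ∧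
      (∀ t ∈ tsTk^[r] T, p (r - 1) (tsSigma T t) = -Lu r t (fun j => Y j.1 t)) := by
  subst hT hT'
  obtain ⟨s, hs, hcard⟩ := hcard
  obtain ⟨δ, hδ, hmin⟩ := hmin
  have hT := isTimeScale_Icc_inter hT₀closed ha hb hab.le
  rw [← hT.iterate_tsTk_Icc_inter] at hmin ⊢
  exact higher_order_euler_lagrange_time_scales_general hr hT
    (hT.lt_iterate_tsRho hs (hcard ▸ by lia))
    ⟨hLc, fun t ht => (hLsmooth t ht).differentiable (by simp), hLu, hLuc⟩ ⟨hY, hYrd⟩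
    ⟨δ, hδ, fun Z hZ => hmin Z hZ.deltaDiffAt hZ.rdContinuousOn⟩
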